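/- Let $p$ be a prime, $q$ a power of $p$, and $M\ge 2$ an integer with $\gcd(M,q)=1$. Write $\bar a=a^q$ for $a\in\mathbb F_{q^2}$, extended coefficientwise to polynomials and entrywise to matrices over $\mathbb F_{q^2}$. For $f\in\mathbb F_{q^2}[t]$ of degree $d$ with $f(0)\neq 0$ put $\tilde f(t)=\overline{f(0)}^{-1}t^d\bar f(t^{-1})$; a monic irreducible $f$ with $f(0)\ne 0$ is called SCIM if $\tilde f=f$. Let $\tilde N_M(q,d)$ be the number of SCIM polynomials $f$ of degree $d$ over $\mathbb F_{q^2}$ such that $f(x^M)$ has a SCIM factor of degree $d$. Let $\tilde R_M(q,d)$ be the number of unordered pairs $\{g,\tilde g\}$, where $g$ is a monic irreducible polynomial of degree $d$ over $\mathbb F_{q^2}$ with $g(0)\neq 0$ and $g\neq\tilde g$ such that $g(x^M)$ has an irreducible factor of degree $d$. Let $U(n,q^2)=\{A\in GL(n,\mathbb F_{q^2}) : A\Lambda_n\bar A^{t}=\Lambda_n\}$, where $\Lambda_n$ is the $n\times n$ anti-diagonal matrix with all anti-diagonal entries $1$. A matrix is cyclic if its minimal polynomial equals its characteristic polynomial.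 For $n\ge 1$ let $cC_U^M(n,q)$ be the number of conjugacy classes of $U(n,q^2)$ that consist of cyclic matrices of the form $\alpha^M$ with $\alpha\in U(n,q^2)$. Then, in the formal power series ring $\mathbb Q[[z]]$, $$1+\sum_{n\ge 1} cC_U^M(n,q)\,z^n=\prod_{d\ \mathrm{odd}}(1-z^d)^{-\tilde N_M(q,d)}\cdot\prod_{d\ge 1}(1-z^{2d})^{-\tilde R_M(q,d)},$$ where $d$ runs over the positive odd integers in the first product, and both infinite products converge. -/

import Mathlib

open Polynomial Matrix
open scoped PowerSeries.WithPiTopology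

noncomputable section

/-- `f̃(t) = conj(f(0))⁻¹ · t^(deg f) · f̄(1/t)`, where the conjugation `σ` is applied
coefficientwise. It is only used for `f(0) ≠ 0`. -/
def tildePoly {F : Type*} [Field F] (σ : F →+* F) (f : F[X]) : F[X] :=
  Polynomial.C (σ (f.coeff 0))⁻¹ * (f.map σ).reverse

/-- A self-conjugate irreducible monic (SCIM) polynomial, with nonzero constant term. -/
def IsSCIM {F : Type*} [Field F] (σ : F →+* F) (f : F[X]) : Prop :=
  f.Monic ∧ Irreducible f ∧ f.coeff 0 ≠ 0 ∧ tildePoly σ f = f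

/-- An `M̃`-power polynomial: a SCIM polynomial `f` such that `f(x^M)` has a SCIM factor of
degree `deg f`. -/
def IsMtildePowerPoly {F : Type*} [Field F] (σ : F →+* F) (M : ℕ) (f : F[X]) : Prop :=
  IsSCIM σ f ∧ ∃ g : F[X], IsSCIM σ g ∧ g.natDegree = f.natDegree ∧ g ∣ f.comp (X ^ M)

/-- `Ñ_M(q,d)`: the number of `M̃`-power SCIM polynomials of degree `d`. -/
def NtildeM {F : Type*} [Field F] (σ : F →+* F) (M d : ℕ) : ℕ :=
  Nat.card {f : F[X] // IsMtildePowerPoly σ M f ∧ f.natDegree = d}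

/-- An `M`-power polynomial: a monic irreducible `g` such that `g(x^M)` has an irreducible
factor of degree `deg g`. -/
def IsMPowerPoly {F : Type*} [Field F] (M : ℕ) (g : F[X]) : Prop :=
  g.Monic ∧ Irreducible g ∧
    ∃ h : F[X], Irreducible h ∧ h.natDegree = g.natDegree ∧ h ∣ g.comp (X ^ M)

/-- `R̃_M(q,d)`: the number of unordered pairs `{g, g̃}` with `g` a monic irreducible
degree-`d` `M`-power polynomial, `g(0) ≠ 0` (so that `g̃` makes sense) and `g ≠ g̃`. -/
def RtildeM {F : Type*} [Field F] (σ : F →+* F) (M d : ℕ) : ℕ :=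
  Nat.card {P : Sym2 F[X] // ∃ g : F[X], IsMPowerPoly M g ∧ g.coeff 0 ≠ 0 ∧
    g.natDegree = d ∧ g ≠ tildePoly σ g ∧ P = s(g, tildePoly σ g)}

/-- The anti-diagonal matrix `Λ_n` with all anti-diagonal entries `1`. -/
def antidiagMat (F : Type*) [Field F] (n : ℕ) : Matrix (Fin n) (Fin n) F :=
  Matrix.of fun i j => if (i : ℕ) + (j : ℕ) + 1 = n then 1 else 0

/-- The unitary group `U(n,q²) = {A ∈ GL(n, F) : A · Λ_n · Āᵗ = Λ_n}`, where `Ā` applies `σ`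
entrywise. -/
def unitaryGrp {F : Type*} [Field F] (σ : F →+* F) (n : ℕ) :
    Subgroup (GL (Fin n) F) where
  carrier := {A | (A : Matrix (Fin n) (Fin n) F) * antidiagMat F n *
    ((A : Matrix (Fin n) (Fin n) F).map σ)ᵀ = antidiagMat F n}
  one_mem' := by simp
  mul_mem' := by
    intro A B hA hB
    simp only [Set.mem_setOf_eq] at hA hB ⊢
    rw [Units.val_mul, Matrix.map_mul, Matrix.transpose_mul]
    calc _ = (A : Matrix (Fin n) (Fin n) F) * ((B : Matrix (Fin n) (Fin n) F) *
          antidiagMat F n * ((B : Matrix (Fin n) (Fin n) F).map σ)ᵀ) *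
          ((A : Matrix (Fin n) (Fin n) F).map σ)ᵀ := by simp only [Matrix.mul_assoc]
      _ = _ := by rw [hB, hA]
  inv_mem' := by
    intro A hA
    simp only [Set.mem_setOf_eq] at hA ⊢
    have h1 : ((A⁻¹ : GL (Fin n) F) : Matrix (Fin n) (Fin n) F) * A = 1 := A.inv_mul
    have h2 : ((A : Matrix (Fin n) (Fin n) F).map σ)ᵀ *
        (((A⁻¹ : GL (Fin n) F) : Matrix (Fin n) (Fin n) F).map σ)ᵀ = 1 := by
      rw [← Matrix.transpose_mul, ← Matrix.map_mul, h1]; simp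
    calc _ = ((A⁻¹ : GL (Fin n) F) : Matrix (Fin n) (Fin n) F) *
          ((A : Matrix (Fin n) (Fin n) F) * antidiagMat F n *
            ((A : Matrix (Fin n) (Fin n) F).map σ)ᵀ) *
          (((A⁻¹ : GL (Fin n) F) : Matrix (Fin n) (Fin n) F).map σ)ᵀ := by rw [hA]
      _ = (((A⁻¹ : GL (Fin n) F) : Matrix (Fin n) (Fin n) F) * A) * antidiagMat F n *
          (((A : Matrix (Fin n) (Fin n) F).map σ)ᵀ *
            (((A⁻¹ : GL (Fin n) F) : Matrix (Fin n) (Fin n) F).map σ)ᵀ) := by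
          simp only [Matrix.mul_assoc]
      _ = _ := by rw [h1, h2, Matrix.one_mul, Matrix.mul_one]

/-- A matrix is cyclic if its minimal polynomial equals its characteristic polynomial. -/
def IsCyclicMat {F : Type*} [Field F] {n : ℕ} (A : Matrix (Fin n) (Fin n) F) : Prop :=
  minpoly F A = A.charpoly

/-- `cC_U^M(n,q)`: the number of conjugacy classes of the group `U(n,q²)` that consist of cyclic
matrices that are `M`-th powers in `U(n,q²)`. -/
def numCycPowerClasses {F : Type*} [Field F] (σ : F →+* F) (M n : ℕ) : ℕ :=
  Nat.card {c : ConjClasses (unitaryGrp σ n) // ∀ A ∈ c.carrier,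
    IsCyclicMat ((A : GL (Fin n) F) : Matrix (Fin n) (Fin n) F) ∧
      ∃ B : unitaryGrp σ n, B ^ M = A}

end

/-!
Write `Λ` for the Gram matrix of the Hermitian form and `A†` for the adjoint of `A`, so that
`U(n, q²)` consists of the `A` with `A† = A⁻¹`. A monic polynomial `f` with `f(0) ≠ 0` is the
characteristic polynomial of a cyclic unitary matrix if and only if `f̃ = f`, and two cyclic
unitary matrices with the same characteristic polynomial are conjugate in `U(n, q²)`: both
statements come from Hilbert's Theorem 90 in a finite commutative ring with involution, applied
to `F[A]`, on which `†` acts by `A ↦ A⁻¹`. An `M`-th root of a cyclic `A` commutes with `A`, hence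
is a polynomial `b(A)`; so `A` is an `M`-th power in `U(n, q²)` if and only if some `b` satisfies
`b ^ M = X` and `b * b† = 1` modulo `f`. As `M` is prime to the characteristic, this condition on
`f` depends only on the irreducible self-conjugate factors of `f`, which are the SCIM polynomials
and the products `g * g̃` with `g ≠ g̃`. Modulo a SCIM polynomial it says that `f` is an `M̃`-power
polynomial, and modulo `g * g̃` that `g` is an `M`-power polynomial. Unique factorization turns
the count of characteristic polynomials into an Euler product over these factors, whose degrees
are the odd numbers for SCIM polynomials and `2 * deg g` for the products `g * g̃`.
-/

/-! ### Finite rings with involution -/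

theorem exists_isIdempotentElem_pow_mul {R : Type*} [Monoid R] [Finite R] (x : R) {m : ℕ}
    (hm : 0 < m) : ∃ k, 0 < k ∧ IsIdempotentElem (x ^ (m * k)) := by
  obtain ⟨i, j, hne, h⟩ := Finite.exists_ne_map_eq_of_infinite (fun n : ℕ => x ^ n)
  wlog hij : i < j generalizing i j
  · exact this j i hne.symm h.symm (lt_of_le_of_ne (not_lt.1 hij) hne.symm)
  obtain ⟨s, rfl⟩ := Nat.exists_eq_add_of_le hij.le
  have periodic (n t : ℕ) (hn : i ≤ n) : x ^ (n + t * s) = x ^ n := by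
    induction t with
    | zero => rw [zero_mul, add_zero]
    | succ t ih =>
      obtain ⟨c, rfl⟩ := Nat.exists_eq_add_of_le hn
      rw [← ih, add_one_mul, show i + c + (t * s + s) = i + s + (c + t * s) by omega,
        add_assoc i c, pow_add x (i + s), ← h, pow_add x i]
  have hs : 0 < s := by omega
  refine ⟨s * (i + 1), Nat.mul_pos hs i.succ_pos, ?_⟩
  have hle : i ≤ m * (s * (i + 1)) := by nlinarith [Nat.mul_pos hm hs]
  calc x ^ (m * (s * (i + 1))) * x ^ (m * (s * (i + 1)))
      = x ^ (m * (s * (i + 1)) + (m * (i + 1)) * s) := by rw [← pow_add]; congr 1; ring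
    _ = x ^ (m * (s * (i + 1))) := periodic _ _ hle

theorem isUnit_pow_mul_add_one_sub_pow_mul {R : Type*} [CommRing R] {x y : R} {k : ℕ} (hk : 0 < k)
    (hx : IsIdempotentElem (x ^ k)) (hy : IsUnit y) (z : R) :
    IsUnit (x ^ k * x + (1 - x ^ k) * (y + x * z)) := by
  have hnil : IsNilpotent ((1 - x ^ k) * (x * z)) := by
    refine ⟨k, ?_⟩
    rw [mul_pow, hx.one_sub.pow_eq hk.ne', mul_pow, ← mul_assoc, hx.one_sub_mul_self, zero_mul]
  have hunit : IsUnit (x ^ k * x + (1 - x ^ k) * y) := by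
    obtain ⟨y', hy'⟩ := hy.exists_right_inv
    obtain ⟨j, rfl⟩ := Nat.exists_eq_add_of_lt hk
    rw [zero_add] at hx ⊢
    set e := x ^ (j + 1)
    have hxe : x * x ^ j = e := (pow_succ' x j).symm
    refine IsUnit.of_mul_eq_one (e * x ^ j + (1 - e) * y') ?_
    linear_combination e ^ 2 * hxe + (1 - e) ^ 2 * hy' + (e + 2 - x * y' - y * x ^ j) * hx.eq
  rw [mul_add, ← add_assoc]
  exact hnil.isUnit_add_left_of_commute hunit (Commute.all _ _)

/-- Hilbert's Theorem 90. The solution is Hilbert's `a + u * τ a`, where `a` interpolates between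
`1` and `l` along an idempotent power of `1 + u` so as to make it invertible. -/
theorem exists_isUnit_mul_involution_eq_self {R : Type*} [CommRing R] [Finite R] {τ : R →+* R}
    (hτ : Function.Involutive τ) {l : R} (hl : IsUnit (l - τ l)) {u : R} (hu : u * τ u = 1) :
    ∃ v, IsUnit v ∧ u * τ v = v := by
  obtain ⟨m, hm, hum⟩ := isOfFinOrder_iff_pow_eq_one.1
    ((IsUnit.of_mul_eq_one _ hu).isOfFinOrder)
  obtain ⟨k, hk, he⟩ := exists_isIdempotentElem_pow_mul (1 + u) hm
  set e := (1 + u) ^ (m * k) with he_def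
  have hτe : τ e = e := by
    have hw : u * τ (1 + u) = 1 + u := by rw [map_add, map_one, mul_add, hu, mul_one, add_comm]
    calc τ e = u ^ (m * k) * τ (1 + u) ^ (m * k) := by
          rw [pow_mul u, hum, one_pow, one_mul, he_def, map_pow]
      _ = e := by rw [← mul_pow, hw]
  have hv : (e + (1 - e) * l) + u * τ (e + (1 - e) * l) =
      e * (1 + u) + (1 - e) * ((l - τ l) + (1 + u) * τ l) := by
    simp only [map_add, map_mul, map_sub, map_one, hτe]
    ring
  refine ⟨_, hv ▸ isUnit_pow_mul_add_one_sub_pow_mul (Nat.mul_pos hm hk) he hl (τ l), ?_⟩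
  rw [map_add, map_mul, hτ, mul_add, ← mul_assoc, hu, one_mul, add_comm]

/-- Writing `N a = a * τ a` and `D a = a / τ a` on units, Hilbert 90 is `ker N = range D`;
counting turns it into `range N = ker D`. -/
theorem exists_mul_involution_eq {R : Type*} [CommRing R] [Finite R] {τ : R →+* R}
    (hτ : Function.Involutive τ) {l : R} (hl : IsUnit (l - τ l)) {c : R} (hc : IsUnit c)
    (hτc : τ c = c) : ∃ u, u * τ u = c := by
  let t : Rˣ →* Rˣ := Units.map (τ : R →* R)
  have ht (a : Rˣ) : t (t a) = a := Units.ext (hτ a)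
  let N : Rˣ →* Rˣ := MonoidHom.id _ * t
  let D : Rˣ →* Rˣ := MonoidHom.id _ / t
  have hN (a : Rˣ) : N a = a * t a := rfl
  have hD (a : Rˣ) : D a = a / t a := rfl
  have hker : N.ker = D.range := by
    ext a
    rw [MonoidHom.mem_ker, MonoidHom.mem_range, hN]
    constructor
    · intro h
      obtain ⟨_, ⟨v, rfl⟩, hv⟩ := exists_isUnit_mul_involution_eq_self hτ hl
        (u := (a : R)) (congrArg Units.val h)
      exact ⟨v, by rw [hD, div_eq_iff_eq_mul]; exact Units.ext hv.symm⟩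
    · rintro ⟨v, rfl⟩
      rw [hD, _root_.map_div, ht, div_mul_div_cancel, div_self']
  have hrange : N.range = D.ker := by
    apply Subgroup.eq_of_le_of_card_ge
    · rintro _ ⟨v, rfl⟩
      rw [MonoidHom.mem_ker, hN, hD, map_mul, ht, mul_comm, div_self']
    · have e1 := N.ker.card_mul_index
      have e2 := D.ker.card_mul_index
      rw [Subgroup.index_ker] at e1 e2
      rw [hker, ← e2, mul_comm] at e1
      exact (Nat.eq_of_mul_eq_mul_right Nat.card_pos e1).ge
  obtain ⟨c, rfl⟩ := hc
  obtain ⟨u, hu⟩ : c ∈ N.range := by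
    rw [hrange, MonoidHom.mem_ker, hD, div_eq_one]
    exact Units.ext hτc.symm
  exact ⟨u, congrArg Units.val hu⟩

theorem isUnit_of_isUnit_val {E : Type*} [Ring E] [Finite E] {C : Subring E} {x : C}
    (hx : IsUnit (x : E)) : IsUnit x :=
  IsLeftRegular.isUnit_of_finite fun _ _ h =>
    Subtype.ext (hx.isRegular.left (congrArg Subtype.val h))

section StarRing

open scoped IsMulCommutative

variable {E : Type*} [Ring E] [StarRing E] [Finite E]

/-- The element `u` is found in the double centralizer of `H`, which is a commutative ring stable
under `star`. -/
theorem exists_mul_star_eq {l : E} (hlc : l ∈ Set.center E) (hl : IsUnit (l - star l)) {H : E}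
    (hH : IsUnit H) (hHs : IsSelfAdjoint H) :
    ∃ u, u * star u = H ∧ ∀ x, Commute x H → Commute x u := by
  let C := Subring.centralizer (Set.centralizer {H} : Set E)
  have hHH : {H} ⊆ Set.centralizer {H} := by simp [Set.mem_centralizer_iff]
  have : IsMulCommutative C :=
    ⟨⟨fun x y => Subtype.ext (y.2 x (Set.centralizer_subset hHH x.2))⟩⟩
  have hstar (x : C) : star (x : E) ∈ C :=
    Set.star_mem_centralizer' (fun _ => Set.star_mem_centralizer' fun _ h => by
      rw [Set.mem_singleton_iff.1 h, hHs.star_eq, Set.mem_singleton_iff]) x.2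
  let τ : C →+* C :=
    { toFun x := ⟨star x, hstar x⟩
      map_one' := Subtype.ext (star_one E)
      map_mul' x y := Subtype.ext (by rw [mul_comm]; exact star_mul (y : E) x)
      map_zero' := Subtype.ext (star_zero E)
      map_add' x y := Subtype.ext (star_add (x : E) y) }
  have hτ : Function.Involutive τ := fun x => Subtype.ext (star_star (x : E))
  obtain ⟨u, hu⟩ := exists_mul_involution_eq hτ
    (l := ⟨l, Set.center_subset_centralizer _ hlc⟩) (isUnit_of_isUnit_val hl)
    (c := ⟨H, Set.subset_centralizer_centralizer rfl⟩) (isUnit_of_isUnit_val hH)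
    (Subtype.ext hHs.star_eq)
  refine ⟨u, congrArg Subtype.val hu, fun x hx => u.2 x ?_⟩
  rintro _ rfl
  exact hx.eq.symm

theorem mem_unitary_of_mul_star_eq_one {A : E} (h : A * star A = 1) : A ∈ unitary E :=
  Unitary.mem_iff.2 ⟨mul_eq_one_symm h, h⟩

/-- The unitary part `P * u⁻¹` of the polar decomposition of `P`, where `u * star u = star P * P`,
still intertwines `A` and `B` because `A` commutes with `star P * P`, hence with `u`. -/
theorem exists_mem_unitary_mul_eq_mul {l : E} (hlc : l ∈ Set.center E)
    (hl : IsUnit (l - star l)) {A B P : E} (hA : A ∈ unitary E) (hB : B ∈ unitary E)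
    (hP : IsUnit P) (h : P * A = B * P) : ∃ Q ∈ unitary E, Q * A = B * Q := by
  obtain ⟨u, hu, hcomm⟩ := exists_mul_star_eq hlc hl (hP.star.mul hP) (.star_mul_self P)
  have hAP : A * star P = star P * B := by
    calc A * star P = A * star (P * A) * B := by
          rw [h, star_mul, ← mul_assoc, mul_assoc, Unitary.star_mul_self_of_mem hB, mul_one]
      _ = star P * B := by
          rw [star_mul, ← mul_assoc, Unitary.mul_star_self_of_mem hA, one_mul]
  have hAu : Commute A u := hcomm A <| by
    rw [Commute, SemiconjBy, ← mul_assoc, hAP, mul_assoc, ← h, mul_assoc]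
  obtain ⟨u, rfl⟩ : IsUnit u := isUnit_of_mul_isUnit_left (hu ▸ hP.star.mul hP)
  have hnormal : Commute (star (u : E)) u := hcomm _ <| by
    have := (hcomm _ (.refl _)).star_star
    rw [IsSelfAdjoint.star_mul_self P] at this
    exact this.symm
  refine ⟨P * ↑u⁻¹, mem_unitary_of_mul_star_eq_one (mul_eq_one_symm ?_), ?_⟩
  · calc star (P * ↑u⁻¹ : E) * (P * ↑u⁻¹) = star (↑u⁻¹ : E) * (star P * P) * ↑u⁻¹ := by
          simp only [star_mul, mul_assoc]
      _ = star (u * ↑u⁻¹ : E) * (u * ↑u⁻¹) := by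
          rw [← hu, ← hnormal.eq, star_mul, mul_assoc, mul_assoc, mul_assoc]
      _ = 1 := by rw [Units.mul_inv, star_one, mul_one]
  · rw [mul_assoc, ← (hAu.symm.units_inv_left).eq.symm, ← mul_assoc, h, mul_assoc]

theorem exists_conj_mem_unitary {l : E} (hlc : l ∈ Set.center E) (hl : IsUnit (l - star l))
    {a H : E} (hH : IsUnit H) (hHs : IsSelfAdjoint H) (ha : a * H * star a = H) :
    ∃ u : Eˣ, ↑u⁻¹ * a * u ∈ unitary E := by
  obtain ⟨u, hu, -⟩ := exists_mul_star_eq hlc hl hH hHs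
  obtain ⟨u, rfl⟩ : IsUnit u := isUnit_of_mul_isUnit_left (hu ▸ hH)
  refine ⟨u, mem_unitary_of_mul_star_eq_one ?_⟩
  calc ↑u⁻¹ * a * u * star (↑u⁻¹ * a * u)
      = ↑u⁻¹ * (a * (u * star (u : E)) * star a) * star (↑u⁻¹ : E) := by
        simp only [star_mul, mul_assoc]
    _ = star (↑u⁻¹ * u : E) := by rw [hu, ha, ← hu, Units.inv_mul_cancel_left, star_mul]
    _ = 1 := by rw [Units.inv_mul, star_one]

theorem star_mul_inv_mul_of_isometry {a : E} {H : Eˣ} (ha : a * H * star a = H) :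
    star a * ↑H⁻¹ * a = (↑H⁻¹ : E) := by
  have h : H * star a * ↑H⁻¹ * a = 1 := mul_eq_one_symm <| by
    rw [← mul_assoc, ← mul_assoc, ha, Units.mul_inv]
  rwa [mul_assoc, mul_assoc, ← Units.eq_inv_mul_iff_mul_eq, mul_one, ← mul_assoc] at h

theorem conj_star_commute_of_isometry {a : E} {H : Eˣ} (ha : a * H * star a = H) {x : E}
    (hx : Commute x a) : Commute (H * star x * ↑H⁻¹) a :=
  calc H * star x * ↑H⁻¹ * a
      = a * H * (star a * star x) * ↑H⁻¹ * a := by rw [← mul_assoc _ (star a), ha]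
    _ = a * H * star x * (star a * ↑H⁻¹ * a) := by
        rw [hx.star_star.symm.eq]; simp only [mul_assoc]
    _ = a * (H * star x * ↑H⁻¹) := by
        rw [star_mul_inv_mul_of_isometry ha]; simp only [mul_assoc]

theorem commute_star_mul_inv_of_isometry {a : E} {H : Eˣ} (ha : a * H * star a = H) :
    Commute (star (H : E) * ↑H⁻¹) a := by
  have ha' : a * star (H : E) * star a = star (H : E) := by
    simpa [mul_assoc] using congrArg star ha
  calc star (H : E) * ↑H⁻¹ * a = a * star (H : E) * (star a * ↑H⁻¹ * a) := by
        nth_rw 1 [← ha']; simp only [mul_assoc]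
    _ = a * (star (H : E) * ↑H⁻¹) := by rw [star_mul_inv_mul_of_isometry ha, mul_assoc]

/-- Hilbert 90 in the centralizer of `a`, with involution `x ↦ H * star x * H⁻¹`, provides `v` such
that `v * H` is self-adjoint. -/
theorem exists_isSelfAdjoint_isometry {l : E} (hlc : l ∈ Set.center E)
    (hl : IsUnit (l - star l)) {a : E} (hcomm : ∀ x y, Commute x a → Commute y a → Commute x y)
    (H : Eˣ) (ha : a * H * star a = H) :
    ∃ H', IsUnit H' ∧ IsSelfAdjoint H' ∧ a * H' * star a = H' := by
  let C := Subring.centralizer {a}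
  have hC {x : E} : x ∈ C ↔ Commute x a := by
    simp [C, Subring.mem_centralizer_iff, Commute, SemiconjBy, eq_comm]
  have : IsMulCommutative C := ⟨⟨fun x y => Subtype.ext (hcomm x y (hC.1 x.2) (hC.1 y.2))⟩⟩
  let w : Eˣ := star H * H⁻¹
  have hw : Commute (w : E) a := commute_star_mul_inv_of_isometry ha
  let τ : C →+* C :=
    { toFun x := ⟨H * star (x : E) * ↑H⁻¹, hC.2 (conj_star_commute_of_isometry ha (hC.1 x.2))⟩
      map_one' := Subtype.ext (by simp)
      map_mul' x y := Subtype.ext (by rw [mul_comm]; simp [mul_assoc])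
      map_zero' := Subtype.ext (by simp)
      map_add' x y := Subtype.ext (by simp [mul_add, add_mul]) }
  have hτ : Function.Involutive τ := fun x => Subtype.ext <| by
    calc H * star (H * star (x : E) * ↑H⁻¹) * ↑H⁻¹ = ↑w⁻¹ * (x * w) := by
          simp [w, mul_assoc]
      _ = x := by rw [(hcomm _ _ (hC.1 x.2) hw).eq, Units.inv_mul_cancel_left]
  obtain ⟨v, hv, hvw⟩ := exists_isUnit_mul_involution_eq_self hτ
    (l := ⟨l, Set.center_subset_centralizer _ hlc⟩)
    (isUnit_of_isUnit_val <| by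
      change IsUnit (l - H * star l * ↑H⁻¹)
      rwa [← ((Set.star_mem_center hlc).comm (H : E)).eq, mul_assoc, Units.mul_inv, mul_one])
    (u := ⟨w, hC.2 hw⟩) (Subtype.ext <| by
      change (w : E) * (H * star (w : E) * ↑H⁻¹) = 1
      simp [w, mul_assoc, ← star_mul (↑H⁻¹ : E) ↑H])
  refine ⟨v * H, hv.map C.subtype |>.mul H.isUnit, ?_, ?_⟩
  · have h : (w : E) * (H * star (v : E) * ↑H⁻¹) = v := congrArg Subtype.val hvw
    rw [isSelfAdjoint_iff, star_mul]
    nth_rw 2 [← h]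
    simp [w, mul_assoc]
  · rw [← mul_assoc, ← (hC.1 v.2).eq, mul_assoc (v : E), mul_assoc (v : E), ha]

end StarRing

/-! ### Cyclic matrices -/

theorem aeval_val_reverse {K S : Type*} [CommRing K] [Ring S] [Algebra K S] (u : Sˣ) (p : K[X]) :
    aeval (u : S) p.reverse = u ^ p.natDegree * aeval (↑u⁻¹ : S) p := by
  rw [reverse]
  refine Polynomial.induction_with_natDegree_le (fun f =>
    aeval (u : S) (reflect p.natDegree f) = u ^ p.natDegree * aeval (↑u⁻¹ : S) f) p.natDegree
    (by simp) (fun k c _ hk => ?_) (fun f g _ _ hf hg => ?_) p le_rfl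
  · obtain ⟨m, hm⟩ := Nat.exists_eq_add_of_le' hk
    have hu : (u : S) ^ (m + k) * (↑u⁻¹ : S) ^ k = u ^ m := by
      simpa using congrArg Units.val (show u ^ (m + k) * u⁻¹ ^ k = u ^ m by
        rw [pow_add, inv_pow, mul_inv_cancel_right])
    rw [reflect_C_mul_X_pow, revAt_le hk, hm, Nat.add_sub_cancel]
    simp only [map_mul, aeval_C, map_pow, aeval_X]
    rw [Algebra.left_comm, hu]
  · rw [reflect_add, map_add, map_add, mul_add, hf, hg]

theorem aeval_reverse_eq_zero_iff {K S : Type*} [CommRing K] [Ring S] [Algebra K S] (u : Sˣ)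
    (p : K[X]) : aeval (u : S) p.reverse = 0 ↔ aeval (↑u⁻¹ : S) p = 0 := by
  rw [aeval_val_reverse, ← Units.val_pow_eq_pow_val, Units.mul_right_eq_zero]

section Cyclic

variable {F : Type*} [Field F] {n : ℕ} {A B : Matrix (Fin n) (Fin n) F}

theorem isCyclicMat_iff :
    IsCyclicMat A ↔ ∀ p : F[X], p.natDegree < n → aeval A p = 0 → p = 0 := by
  have hint : IsIntegral F A := Matrix.isIntegral A
  have hdeg : A.charpoly.natDegree = n := by rw [charpoly_natDegree_eq_dim, Fintype.card_fin]
  refine ⟨fun h p hp h0 => ?_, fun h => ?_⟩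
  · by_contra hne
    have := natDegree_le_of_dvd (minpoly.dvd F A h0) hne
    rw [h, hdeg] at this
    omega
  · refine (eq_of_monic_of_dvd_of_natDegree_le (minpoly.monic hint) A.charpoly_monic
      (minpoly.dvd F A A.aeval_self_charpoly) ?_).symm
    rw [hdeg]
    by_contra! hlt
    exact minpoly.ne_zero hint (h _ hlt (minpoly.aeval F A))

theorem IsCyclicMat.charpoly_dvd_iff (hA : IsCyclicMat A) {p : F[X]} :
    A.charpoly ∣ p ↔ aeval A p = 0 := by
  rw [← show minpoly F A = _ from hA, minpoly.dvd_iff]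

theorem isUnit_iff_charpoly_coeff_zero_ne_zero : IsUnit A ↔ A.charpoly.coeff 0 ≠ 0 := by
  rw [isUnit_iff_isUnit_det, det_eq_sign_charpoly_coeff, isUnit_iff_ne_zero, mul_ne_zero_iff]
  exact and_iff_right (pow_ne_zero _ (neg_ne_zero.2 one_ne_zero))

theorem IsCyclicMat.inv {A : GL (Fin n) F} (hA : IsCyclicMat (A : Matrix (Fin n) (Fin n) F)) :
    IsCyclicMat (↑A⁻¹ : Matrix (Fin n) (Fin n) F) := by
  rw [isCyclicMat_iff] at hA ⊢
  intro p hp h0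
  rw [← aeval_reverse_eq_zero_iff] at h0
  exact reverse_eq_zero.1 (hA _ ((reverse_natDegree_le p).trans_lt hp) h0)

theorem IsCyclicMat.conj (hA : IsCyclicMat A) (P : GL (Fin n) F) :
    IsCyclicMat ((P : Matrix (Fin n) (Fin n) F) * A * (↑P⁻¹ : Matrix (Fin n) (Fin n) F)) := by
  have h := minpoly.algEquiv_eq
    (MulSemiringAction.toAlgEquiv F (Matrix (Fin n) (Fin n) F) (ConjAct.toConjAct P)) A
  rw [MulSemiringAction.toAlgEquiv_apply, ConjAct.units_smul_def, ConjAct.ofConjAct_toConjAct] at h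
  rw [IsCyclicMat, h, Matrix.coe_units_inv, charpoly_units_conj]
  exact hA

theorem exists_isCyclicMat_charpoly_eq {f : F[X]} (hf : f.Monic) (hn : f.natDegree = n) :
    ∃ A : Matrix (Fin n) (Fin n) F, IsCyclicMat A ∧ A.charpoly = f := by
  subst hn
  let pb := AdjoinRoot.powerBasis hf.ne_zero
  have hcharpoly := charpoly_leftMulMatrix pb
  have hminpoly : minpoly F (Algebra.leftMulMatrix pb.basis pb.gen) = minpoly F pb.gen :=
    minpoly.algHom_eq _ (Algebra.leftMulMatrix_injective pb.basis) _
  exact ⟨Algebra.leftMulMatrix pb.basis pb.gen, hminpoly.trans hcharpoly.symm,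
    hcharpoly.trans (AdjoinRoot.minpoly_powerBasis_gen_of_monic hf)⟩

/-- The map `p ↦ p(A) v`; its surjectivity says that `v` is a cyclic vector of `A`. -/
noncomputable def orbitMap (A : Matrix (Fin n) (Fin n) F) (v : Fin n → F) :
    F[X] →ₗ[F] Fin n → F where
  toFun p := aeval A p *ᵥ v
  map_add' p q := by rw [map_add, add_mulVec]
  map_smul' c p := by rw [map_smul, smul_mulVec, RingHom.id_apply]

theorem orbitMap_apply (v : Fin n → F) (p : F[X]) : orbitMap A v p = aeval A p *ᵥ v := rfl

theorem orbitMap_X_mul (v : Fin n → F) (p : F[X]) :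
    orbitMap A v (X * p) = A *ᵥ orbitMap A v p := by
  rw [orbitMap_apply, map_mul, aeval_X, ← mulVec_mulVec, orbitMap_apply]

theorem aeval_mulVecLin (A : Matrix (Fin n) (Fin n) F) (p : F[X]) (v : Fin n → F) :
    aeval A.mulVecLin p v = aeval A p *ᵥ v := by
  rw [← Matrix.toLin'_apply]
  exact congrArg (fun φ => φ v) (aeval_algHom_apply (Matrix.toLinAlgEquiv' : _ ≃ₐ[F] _) A p)

theorem exists_orbitMap_eq_zero_imp (A : Matrix (Fin n) (Fin n) F) :
    ∃ v, ∀ p, orbitMap A v p = 0 → aeval A p = 0 := by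
  obtain ⟨x, hx⟩ := Module.exists_ker_toSpanSingleton_eq_annihilator F[X]
    (Module.AEval' A.mulVecLin)
  obtain ⟨v, rfl⟩ := (Module.AEval'.of A.mulVecLin).surjective x
  have hsmul (p : F[X]) (w : Fin n → F) : p • Module.AEval'.of A.mulVecLin w = 0 ↔
      aeval A p *ᵥ w = 0 := by
    rw [← Module.AEval.of_aeval_smul, Module.End.smul_def, aeval_mulVecLin,
      LinearEquiv.map_eq_zero_iff]
  refine ⟨v, fun p hp => mulVec_injective (funext fun w => ?_)⟩
  have hpx : p ∈ Module.annihilator F[X] (Module.AEval' A.mulVecLin) := by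
    rw [← hx, LinearMap.mem_ker, LinearMap.toSpanSingleton_apply]
    exact (hsmul p v).2 hp
  rw [(hsmul p w).1 (Module.mem_annihilator.1 hpx _), zero_mulVec]

theorem IsCyclicMat.exists_surjective_orbitMap (hA : IsCyclicMat A) :
    ∃ v, Function.Surjective (orbitMap A v) := by
  obtain ⟨v, hv⟩ := exists_orbitMap_eq_zero_imp A
  have hinj : Function.Injective (orbitMap A v ∘ₗ (degreeLT F n).subtype) := by
    refine (injective_iff_map_eq_zero _).2 fun p hp => Subtype.ext ?_
    by_contra h0
    exact h0 (isCyclicMat_iff.1 hA p ((natDegree_lt_iff_degree_lt h0).2 (mem_degreeLT.1 p.2))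
      (hv p hp))
  have : FiniteDimensional F (degreeLT F n) := (degreeLTEquiv F n).symm.finiteDimensional
  have hsurj := (LinearMap.injective_iff_surjective_of_finrank_eq_finrank
    (degreeLTEquiv F n).finrank_eq).1 hinj
  exact ⟨v, fun w => (hsurj w).imp' _ fun p hp => hp⟩

theorem eq_zero_of_mulVec_eq_zero {v : Fin n → F} (hv : Function.Surjective (orbitMap A v))
    (hB : Commute A B) (h : B *ᵥ v = 0) : B = 0 := by
  refine mulVec_injective (funext fun w => ?_)
  obtain ⟨p, rfl⟩ := hv w
  have hpB : Commute B (aeval A p) := Algebra.commute_of_mem_adjoin_singleton_of_commute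
    (aeval_mem_adjoin_singleton F A) hB.symm
  rw [orbitMap_apply, mulVec_mulVec, hpB.eq, ← mulVec_mulVec, h, mulVec_zero, zero_mulVec]

theorem IsCyclicMat.exists_aeval_eq_of_commute (hA : IsCyclicMat A) (hB : Commute A B) :
    ∃ p : F[X], aeval A p = B := by
  obtain ⟨v, hv⟩ := hA.exists_surjective_orbitMap
  obtain ⟨p, hp⟩ := hv (B *ᵥ v)
  refine ⟨p, sub_eq_zero.1 (eq_zero_of_mulVec_eq_zero hv (Commute.sub_right ?_ hB) ?_)⟩
  · exact Algebra.commute_of_mem_adjoin_self (aeval_mem_adjoin_singleton F A)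
  · rw [sub_mulVec, ← orbitMap_apply, hp, sub_self]

theorem IsCyclicMat.commute_of_commute (hA : IsCyclicMat A) {B C : Matrix (Fin n) (Fin n) F}
    (hB : Commute B A) (hC : Commute C A) : Commute B C := by
  obtain ⟨p, rfl⟩ := hA.exists_aeval_eq_of_commute hB.symm
  obtain ⟨q, rfl⟩ := hA.exists_aeval_eq_of_commute hC.symm
  exact (Commute.all p q).map (aeval A)

theorem IsCyclicMat.orbitMap_eq_zero_iff (hA : IsCyclicMat A) {v : Fin n → F}
    (hv : Function.Surjective (orbitMap A v)) {p : F[X]} :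
    orbitMap A v p = 0 ↔ A.charpoly ∣ p := by
  rw [hA.charpoly_dvd_iff, orbitMap_apply]
  refine ⟨fun h => eq_zero_of_mulVec_eq_zero hv ?_ h, fun h => by rw [h, zero_mulVec]⟩
  exact Algebra.commute_of_mem_adjoin_self (aeval_mem_adjoin_singleton F A)

theorem exists_linearEquiv_comp_eq {R V W W' : Type*} [Ring R] [AddCommGroup V] [AddCommGroup W]
    [AddCommGroup W'] [Module R V] [Module R W] [Module R W'] {f : V →ₗ[R] W} {g : V →ₗ[R] W'}
    (hf : Function.Surjective f) (hg : Function.Surjective g)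
    (h : LinearMap.ker f = LinearMap.ker g) : ∃ e : W ≃ₗ[R] W', ∀ x, e (f x) = g x := by
  refine ⟨(f.quotKerEquivOfSurjective hf).symm ≪≫ₗ Submodule.quotEquivOfEq _ _ h ≪≫ₗ
    g.quotKerEquivOfSurjective hg, fun x => ?_⟩
  simp [LinearMap.quotKerEquivOfSurjective_symm_apply]

theorem IsCyclicMat.exists_mul_eq_mul (hA : IsCyclicMat A) (hB : IsCyclicMat B)
    (h : A.charpoly = B.charpoly) : ∃ P, IsUnit P ∧ P * A = B * P := by
  obtain ⟨v, hv⟩ := hA.exists_surjective_orbitMap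
  obtain ⟨w, hw⟩ := hB.exists_surjective_orbitMap
  obtain ⟨e, he⟩ := exists_linearEquiv_comp_eq hv hw <| by
    ext p
    rw [LinearMap.mem_ker, LinearMap.mem_ker, hA.orbitMap_eq_zero_iff hv,
      hB.orbitMap_eq_zero_iff hw, h]
  refine ⟨LinearMap.toMatrix' e.toLinearMap, ?_, mulVec_injective (funext fun x => ?_)⟩
  · refine .of_mul_eq_one (LinearMap.toMatrix' e.symm.toLinearMap) ?_
    rw [← LinearMap.toMatrix'_comp, e.comp_symm, LinearMap.toMatrix'_id]
  · obtain ⟨p, rfl⟩ := hv x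
    rw [← mulVec_mulVec, ← mulVec_mulVec, LinearMap.toMatrix'_mulVec, LinearMap.toMatrix'_mulVec,
      ← orbitMap_X_mul, LinearEquiv.coe_coe, he, he, orbitMap_X_mul]

end Cyclic

/-! ### Cyclic elements of the unitary group -/

section UnitaryAdjoint

variable {F : Type*} [Field F] {n : ℕ} (σ : F →+* F)

theorem antidiagMat_apply (i j : Fin n) : antidiagMat F n i j = if j = i.rev then 1 else 0 := by
  simp only [antidiagMat, of_apply, Fin.ext_iff, Fin.val_rev]
  congr 1
  rw [eq_iff_iff]
  omega

theorem antidiagMat_mul_self : antidiagMat F n * antidiagMat F n = 1 := by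
  ext i j
  simp only [mul_apply, antidiagMat_apply, ite_mul, one_mul, zero_mul, Finset.sum_ite_eq',
    Finset.mem_univ, if_true, Fin.rev_rev, one_apply, eq_comm]

theorem transpose_map_antidiagMat : ((antidiagMat F n).map σ)ᵀ = antidiagMat F n := by
  ext i j
  rw [transpose_apply, map_apply, antidiagMat, of_apply, of_apply, apply_ite σ, map_one, map_zero,
    add_comm (j : ℕ)]

/-- The adjoint of a matrix with respect to the Hermitian form whose Gram matrix is `Λ_n`, where
the conjugation is `σ`. As `Λ_n` is its own inverse, no inverse occurs in the formula. -/
noncomputable def unitaryAdjoint (A : Matrix (Fin n) (Fin n) F) : Matrix (Fin n) (Fin n) F :=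
  antidiagMat F n * (A.map σ)ᵀ * antidiagMat F n

variable {σ}

theorem unitaryAdjoint_add (A B : Matrix (Fin n) (Fin n) F) :
    unitaryAdjoint σ (A + B) = unitaryAdjoint σ A + unitaryAdjoint σ B := by
  simp only [unitaryAdjoint, Matrix.map_add _ (map_add σ), transpose_add, mul_add, add_mul]

theorem unitaryAdjoint_mul (A B : Matrix (Fin n) (Fin n) F) :
    unitaryAdjoint σ (A * B) = unitaryAdjoint σ B * unitaryAdjoint σ A := by
  calc antidiagMat F n * ((A * B).map σ)ᵀ * antidiagMat F n
      = antidiagMat F n * (B.map σ)ᵀ * 1 * (A.map σ)ᵀ * antidiagMat F n := by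
        rw [Matrix.map_mul, transpose_mul, mul_one, ← mul_assoc]
    _ = unitaryAdjoint σ B * unitaryAdjoint σ A := by
        rw [← antidiagMat_mul_self]
        simp only [unitaryAdjoint, mul_assoc]

theorem unitaryAdjoint_algebraMap (c : F) :
    unitaryAdjoint σ (algebraMap F (Matrix (Fin n) (Fin n) F) c) = algebraMap F _ (σ c) := by
  have hmap : ((algebraMap F (Matrix (Fin n) (Fin n) F) c).map σ)ᵀ = algebraMap F _ (σ c) := by
    rw [algebraMap_eq_diagonal, diagonal_map (map_zero σ), diagonal_transpose,
      algebraMap_eq_diagonal]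
    rfl
  rw [unitaryAdjoint, hmap, ← Algebra.commutes, mul_assoc, antidiagMat_mul_self, mul_one]

theorem unitaryAdjoint_unitaryAdjoint (hσ : Function.Involutive σ)
    (A : Matrix (Fin n) (Fin n) F) : unitaryAdjoint σ (unitaryAdjoint σ A) = A := by
  have hmap : ((A.map σ).map σ) = A := by ext i j; exact hσ _
  simp only [unitaryAdjoint, Matrix.map_mul, transpose_mul, transpose_map_antidiagMat]
  rw [transpose_map, transpose_transpose, hmap]
  simp only [← mul_assoc, antidiagMat_mul_self, one_mul]
  rw [mul_assoc, antidiagMat_mul_self, mul_one]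

theorem unitaryAdjoint_pow (A : Matrix (Fin n) (Fin n) F) (k : ℕ) :
    unitaryAdjoint σ (A ^ k) = unitaryAdjoint σ A ^ k := by
  induction k with
  | zero => simpa using unitaryAdjoint_algebraMap (σ := σ) (n := n) 1
  | succ k ih => rw [pow_succ, unitaryAdjoint_mul, ih, pow_succ']

theorem unitaryAdjoint_aeval (A : Matrix (Fin n) (Fin n) F) (p : F[X]) :
    unitaryAdjoint σ (aeval A p) = aeval (unitaryAdjoint σ A) (p.map σ) := by
  induction p using Polynomial.induction_on' with
  | add p q hp hq => rw [map_add, unitaryAdjoint_add, hp, hq, Polynomial.map_add, map_add]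
  | monomial k c =>
    rw [map_monomial, aeval_monomial, aeval_monomial, unitaryAdjoint_mul, unitaryAdjoint_pow,
      unitaryAdjoint_algebraMap, Algebra.commutes]

theorem charpoly_unitaryAdjoint (A : Matrix (Fin n) (Fin n) F) :
    (unitaryAdjoint σ A).charpoly = A.charpoly.map σ := by
  rw [unitaryAdjoint, mul_assoc, charpoly_mul_comm, mul_assoc, antidiagMat_mul_self, mul_one,
    charpoly_transpose, charpoly_map]

theorem IsCyclicMat.unitaryAdjoint (hσ : Function.Involutive σ) {A : Matrix (Fin n) (Fin n) F}
    (hA : IsCyclicMat A) : IsCyclicMat (unitaryAdjoint σ A) := by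
  rw [isCyclicMat_iff] at hA ⊢
  intro p hp h0
  refine (Polynomial.map_eq_zero σ).1 (hA (p.map σ) (by rwa [natDegree_map]) ?_)
  rw [← unitaryAdjoint_unitaryAdjoint hσ A, ← unitaryAdjoint_aeval, h0]
  simp [_root_.unitaryAdjoint]

theorem isUnit_unitaryAdjoint {A : Matrix (Fin n) (Fin n) F} (hA : IsUnit A) :
    IsUnit (unitaryAdjoint σ A) := by
  obtain ⟨u, rfl⟩ := hA
  refine .of_mul_eq_one (unitaryAdjoint σ ↑u⁻¹) ?_
  rw [← unitaryAdjoint_mul, Units.inv_mul]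
  simpa using unitaryAdjoint_algebraMap (σ := σ) (n := n) 1

theorem charpoly_inv_unitaryAdjoint {A : Matrix (Fin n) (Fin n) F} (hA : IsUnit A) :
    (unitaryAdjoint σ A)⁻¹.charpoly = tildePoly σ A.charpoly := by
  have hsign : ((-1 : F) ^ Fintype.card (Fin n))⁻¹ = (-1) ^ Fintype.card (Fin n) := by
    rw [← inv_pow, inv_neg, inv_one]
  rw [charpoly_inv _ (isUnit_unitaryAdjoint hA), ← reverse_charpoly, tildePoly,
    Ring.inverse_eq_inv', det_eq_sign_charpoly_coeff, charpoly_unitaryAdjoint, coeff_map, mul_inv,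
    C_mul, ← mul_assoc, hsign]
  congr 2
  simp [← mul_pow]

theorem mem_unitaryGrp_iff {A : GL (Fin n) F} :
    A ∈ unitaryGrp σ n ↔ (A : Matrix (Fin n) (Fin n) F) * unitaryAdjoint σ A = 1 := by
  change (A : Matrix (Fin n) (Fin n) F) * antidiagMat F n * (A.1.map σ)ᵀ = antidiagMat F n ↔ _
  rw [unitaryAdjoint, ← mul_assoc, ← mul_assoc]
  constructor
  · intro h
    rw [h, antidiagMat_mul_self]
  · intro h
    rw [← mul_one (_ * _), ← antidiagMat_mul_self, ← mul_assoc, h, one_mul]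

theorem tildePoly_charpoly_of_mem_unitaryGrp {A : GL (Fin n) F} (hA : A ∈ unitaryGrp σ n) :
    tildePoly σ (A : Matrix (Fin n) (Fin n) F).charpoly = A.1.charpoly := by
  rw [← charpoly_inv_unitaryAdjoint A.isUnit,
    inv_eq_left_inv (mem_unitaryGrp_iff.1 hA)]

/-- The involution `unitaryAdjoint` as a star ring structure. It is not an instance, since it
depends on `σ`. -/
@[reducible]
noncomputable def unitaryStarRing (hσ : Function.Involutive σ) :
    StarRing (Matrix (Fin n) (Fin n) F) where
  star := unitaryAdjoint σ
  star_involutive := unitaryAdjoint_unitaryAdjoint hσ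
  star_mul := unitaryAdjoint_mul
  star_add := unitaryAdjoint_add

theorem isUnit_algebraMap_sub_unitaryAdjoint {l : F} (hl : σ l ≠ l) :
    IsUnit (algebraMap F (Matrix (Fin n) (Fin n) F) l - unitaryAdjoint σ (algebraMap F _ l)) := by
  rw [unitaryAdjoint_algebraMap, ← map_sub]
  exact (sub_ne_zero.2 hl.symm).isUnit.map _

section Finite

variable [Finite F] (hσ : Function.Involutive σ) {l : F} (hl : σ l ≠ l)
include hσ hl

theorem exists_conj_eq_of_mem_unitaryGrp {A B : GL (Fin n) F} (hA : A ∈ unitaryGrp σ n)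
    (hB : B ∈ unitaryGrp σ n) {P : Matrix (Fin n) (Fin n) F} (hP : IsUnit P)
    (h : P * A = B * P) : ∃ Q ∈ unitaryGrp σ n, Q * A * Q⁻¹ = B := by
  let := unitaryStarRing (n := n) hσ
  obtain ⟨Q, hQ, hQAB⟩ := exists_mem_unitary_mul_eq_mul
    (Set.algebraMap_mem_center l) (isUnit_algebraMap_sub_unitaryAdjoint hl)
    (mem_unitary_of_mul_star_eq_one (mem_unitaryGrp_iff.1 hA))
    (mem_unitary_of_mul_star_eq_one (mem_unitaryGrp_iff.1 hB)) hP h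
  refine ⟨Unitary.toUnits ⟨Q, hQ⟩, mem_unitaryGrp_iff.2 (Unitary.mul_star_self_of_mem hQ), ?_⟩
  exact mul_inv_eq_of_eq_mul (Units.ext hQAB)

theorem exists_isCyclicMat_mem_unitaryGrp {f : F[X]} (hf : f.Monic) (hf0 : f.coeff 0 ≠ 0)
    (hfσ : tildePoly σ f = f) (hn : f.natDegree = n) :
    ∃ A ∈ unitaryGrp σ n, IsCyclicMat (A : Matrix (Fin n) (Fin n) F) ∧
      (A : Matrix (Fin n) (Fin n) F).charpoly = f := by
  let := unitaryStarRing (n := n) hσ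
  obtain ⟨A, hA, rfl⟩ := exists_isCyclicMat_charpoly_eq hf hn
  have hunit : IsUnit A := isUnit_iff_charpoly_coeff_zero_ne_zero.2 hf0
  obtain ⟨S, hS⟩ := isUnit_unitaryAdjoint (σ := σ) hunit
  have hcyc : IsCyclicMat (↑S⁻¹ : Matrix (Fin n) (Fin n) F) := by
    refine IsCyclicMat.inv ?_
    rw [hS]
    exact hA.unitaryAdjoint hσ
  have hchar : (↑S⁻¹ : Matrix (Fin n) (Fin n) F).charpoly = A.charpoly := by
    rw [coe_units_inv, hS, charpoly_inv_unitaryAdjoint hunit, hfσ]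
  obtain ⟨_, ⟨P, rfl⟩, hP⟩ := hcyc.exists_mul_eq_mul hA hchar
  have hisom : A * P * star A = P := by
    change A * P * unitaryAdjoint σ A = P
    rw [← hP, ← hS, mul_assoc, Units.inv_mul, mul_one]
  obtain ⟨H, hH, hHs, hAH⟩ := exists_isSelfAdjoint_isometry (Set.algebraMap_mem_center l)
    (isUnit_algebraMap_sub_unitaryAdjoint hl)
    (fun x y hx hy => hA.commute_of_commute hx hy) P hisom
  obtain ⟨u, hu⟩ := exists_conj_mem_unitary (Set.algebraMap_mem_center l)
    (isUnit_algebraMap_sub_unitaryAdjoint hl) hH hHs hAH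
  refine ⟨Unitary.toUnits ⟨_, hu⟩, mem_unitaryGrp_iff.2 (Unitary.mul_star_self_of_mem hu), ?_, ?_⟩
  · simpa using hA.conj u⁻¹
  · simp [charpoly_units_conj']

end Finite

end UnitaryAdjoint

/-! ### Conjugate reciprocals of polynomials -/

section TildePoly

variable {F : Type*} [Field F] {σ : F →+* F} {f g : F[X]}

theorem coeff_zero_ne_zero_of_dvd (h : g ∣ f) (h0 : f.coeff 0 ≠ 0) : g.coeff 0 ≠ 0 := by
  obtain ⟨k, rfl⟩ := h
  rw [mul_coeff_zero] at h0
  exact left_ne_zero_of_mul h0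

theorem exists_dvd_X_mul_sub_one (h0 : f.coeff 0 ≠ 0) : ∃ y : F[X], f ∣ X * y - 1 := by
  obtain ⟨a, b, hab⟩ := (irreducible_X.coprime_iff_not_dvd (n := f)).2
    fun h => h0 (X_dvd_iff.1 h)
  exact ⟨a, -b, by linear_combination hab⟩

theorem tildePoly_mul (f g : F[X]) : tildePoly σ (f * g) = tildePoly σ f * tildePoly σ g := by
  simp only [tildePoly, Polynomial.map_mul, reverse_mul_of_domain, mul_coeff_zero, map_mul,
    mul_inv]
  ring

theorem tildePoly_one : tildePoly σ (1 : F[X]) = 1 := by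
  rw [tildePoly, Polynomial.map_one, coeff_one_zero, map_one, inv_one, C_1, one_mul,
    ← C_1, reverse_C]

theorem tildePoly_dvd_tildePoly (h : g ∣ f) : tildePoly σ g ∣ tildePoly σ f := by
  obtain ⟨k, rfl⟩ := h
  exact ⟨_, tildePoly_mul g k⟩

theorem natDegree_tildePoly (h0 : f.coeff 0 ≠ 0) : (tildePoly σ f).natDegree = f.natDegree := by
  have hσ0 : σ (f.coeff 0) ≠ 0 := (map_ne_zero σ).2 h0
  rw [tildePoly, natDegree_C_mul (inv_ne_zero hσ0), reverse_natDegree,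
    natTrailingDegree_eq_zero.2 (Or.inr (by rwa [coeff_map])), Nat.sub_zero, natDegree_map]

theorem monic_tildePoly (h0 : f.coeff 0 ≠ 0) : (tildePoly σ f).Monic := by
  have hσ0 : σ (f.coeff 0) ≠ 0 := (map_ne_zero σ).2 h0
  rw [Monic, tildePoly, leadingCoeff_mul, leadingCoeff_C, reverse_leadingCoeff, trailingCoeff,
    natTrailingDegree_eq_zero.2 (Or.inr (by rwa [coeff_map])), coeff_map, inv_mul_cancel₀ hσ0]

theorem coeff_zero_tildePoly (hf : f.Monic) : (tildePoly σ f).coeff 0 = (σ (f.coeff 0))⁻¹ := by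
  rw [tildePoly, coeff_C_mul, coeff_zero_reverse, (hf.map σ).leadingCoeff, mul_one]

theorem coeff_zero_tildePoly_ne_zero (hf : f.Monic) (h0 : f.coeff 0 ≠ 0) :
    (tildePoly σ f).coeff 0 ≠ 0 := by
  rw [coeff_zero_tildePoly hf]
  exact inv_ne_zero ((map_ne_zero σ).2 h0)

theorem tildePoly_tildePoly (hσ : Function.Involutive σ) (hf : f.Monic) (h0 : f.coeff 0 ≠ 0) :
    tildePoly σ (tildePoly σ f) = f := by
  have hd : ((tildePoly σ f).map σ).natDegree = f.natDegree := by
    rw [natDegree_map, natDegree_tildePoly h0]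
  ext k
  have hc : (tildePoly σ f).coeff (revAt f.natDegree k) = (σ (f.coeff 0))⁻¹ * σ (f.coeff k) := by
    rw [tildePoly, coeff_C_mul, coeff_reverse, natDegree_map, revAt_invol, coeff_map]
  rw [tildePoly, coeff_C_mul, coeff_reverse, hd, coeff_map, hc, map_mul, hσ,
    coeff_zero_tildePoly hf, map_inv₀, hσ, inv_inv, ← mul_assoc, mul_inv_cancel₀ h0, one_mul]

theorem isUnit_tildePoly_iff (h0 : f.coeff 0 ≠ 0) : IsUnit (tildePoly σ f) ↔ IsUnit f := by
  have hne : f ≠ 0 := by rintro rfl; exact h0 (coeff_zero 0)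
  rw [Polynomial.isUnit_iff_degree_eq_zero, Polynomial.isUnit_iff_degree_eq_zero,
    degree_eq_natDegree hne, degree_eq_natDegree (monic_tildePoly h0).ne_zero,
    natDegree_tildePoly h0]

theorem irreducible_tildePoly (hσ : Function.Involutive σ) (hf : f.Monic) (h0 : f.coeff 0 ≠ 0)
    (hi : Irreducible f) : Irreducible (tildePoly σ f) := by
  refine ⟨fun h => hi.not_isUnit ((isUnit_tildePoly_iff h0).1 h), fun a b hab => ?_⟩
  have hab0 := coeff_zero_tildePoly_ne_zero (σ := σ) hf h0
  have ha := coeff_zero_ne_zero_of_dvd ⟨b, hab⟩ hab0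
  have hb := coeff_zero_ne_zero_of_dvd ⟨a, hab.trans (mul_comm a b)⟩ hab0
  have hf_eq := congrArg (tildePoly σ) hab
  rw [tildePoly_tildePoly hσ hf h0, tildePoly_mul] at hf_eq
  exact (hi.isUnit_or_isUnit hf_eq).imp (isUnit_tildePoly_iff ha).1 (isUnit_tildePoly_iff hb).1

theorem aeval_tildePoly_eq_zero_iff {S : Type*} [Ring S] [Algebra F S] (u : Sˣ)
    (h0 : f.coeff 0 ≠ 0) :
    aeval (u : S) (tildePoly σ f) = 0 ↔ aeval (↑u⁻¹ : S) (f.map σ) = 0 := by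
  have hunit : IsUnit (algebraMap F S (σ (f.coeff 0))⁻¹) :=
    (inv_ne_zero ((map_ne_zero σ).2 h0)).isUnit.map _
  rw [← aeval_reverse_eq_zero_iff, tildePoly, map_mul, aeval_C, hunit.mul_right_eq_zero]

end TildePoly

section IsSelfConj

variable {F : Type*} [Field F] {σ : F →+* F} {f g : F[X]}

/-- Self-conjugate polynomials, normalized as in the definition of SCIM polynomials: these are the
characteristic polynomials of unitary matrices. -/
def IsSelfConj (σ : F →+* F) (f : F[X]) : Prop :=
  f.Monic ∧ f.coeff 0 ≠ 0 ∧ tildePoly σ f = f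

theorem isSCIM_iff : IsSCIM σ f ↔ Irreducible f ∧ IsSelfConj σ f := by
  rw [IsSCIM, IsSelfConj, and_left_comm]

theorem isSelfConj_one : IsSelfConj σ 1 :=
  ⟨monic_one, by rw [coeff_one_zero]; exact one_ne_zero, tildePoly_one⟩

theorem IsSelfConj.mul (hf : IsSelfConj σ f) (hg : IsSelfConj σ g) : IsSelfConj σ (f * g) :=
  ⟨hf.1.mul hg.1, by rw [mul_coeff_zero]; exact mul_ne_zero hf.2.1 hg.2.1,
    by rw [tildePoly_mul, hf.2.2, hg.2.2]⟩

theorem IsSelfConj.pow (hf : IsSelfConj σ f) (k : ℕ) : IsSelfConj σ (f ^ k) := by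
  induction k with
  | zero => rw [pow_zero]; exact isSelfConj_one
  | succ k ih => rw [pow_succ]; exact ih.mul hf

theorem IsSelfConj.of_mul (hfg : IsSelfConj σ (f * g)) (hf : IsSelfConj σ f) :
    IsSelfConj σ g := by
  refine ⟨hf.1.of_mul_monic_left hfg.1,
    coeff_zero_ne_zero_of_dvd (Dvd.intro_left f rfl) hfg.2.1, ?_⟩
  have h := hfg.2.2
  rw [tildePoly_mul, hf.2.2] at h
  exact mul_left_cancel₀ hf.1.ne_zero h

theorem isSelfConj_mul_tildePoly (hσ : Function.Involutive σ) (hf : f.Monic)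
    (h0 : f.coeff 0 ≠ 0) : IsSelfConj σ (f * tildePoly σ f) := by
  refine ⟨hf.mul (monic_tildePoly h0), ?_, ?_⟩
  · rw [mul_coeff_zero]
    exact mul_ne_zero h0 (coeff_zero_tildePoly_ne_zero hf h0)
  · rw [tildePoly_mul, tildePoly_tildePoly hσ hf h0, mul_comm]

end IsSelfConj

/-! ### Conjugation modulo a self-conjugate polynomial -/

section ConjComp

variable {F : Type*} [Field F] {σ : F →+* F} {f y y' : F[X]}

/-- The ring homomorphism `p ↦ p̄(y)`. If `y` is an inverse of `X` modulo a self-conjugate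
polynomial `f`, it induces the involution of `F[X] / (f)` which inverts `X`. -/
noncomputable def conjComp (σ : F →+* F) (y : F[X]) : F[X] →+* F[X] :=
  (compRingHom y).comp (mapRingHom σ)

theorem conjComp_apply (p : F[X]) : conjComp σ y p = (p.map σ).comp y := rfl

theorem conjComp_X : conjComp σ y X = y := by
  rw [conjComp_apply, map_X, X_comp]

theorem aeval_conjComp {S : Type*} [Ring S] [Algebra F S] (a : S) (p : F[X]) :
    aeval a (conjComp σ y p) = aeval (aeval a y) (p.map σ) := by
  rw [conjComp_apply, aeval_comp]

theorem dvd_conjComp_sub_conjComp (h : f ∣ y - y') (p : F[X]) :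
    f ∣ conjComp σ y p - conjComp σ y' p := by
  rw [← AdjoinRoot.mk_eq_mk, ← AdjoinRoot.aeval_eq, ← AdjoinRoot.aeval_eq] at h ⊢
  rw [aeval_conjComp, aeval_conjComp, h]

theorem tildePoly_dvd_conjComp (h0 : f.coeff 0 ≠ 0) (hy : tildePoly σ f ∣ X * y - 1) {p : F[X]}
    (hp : f ∣ p) : tildePoly σ f ∣ conjComp σ y p := by
  refine dvd_trans ?_ (map_dvd (conjComp σ y) hp)
  let u : (AdjoinRoot (tildePoly σ f))ˣ := Units.mkOfMulEqOne
    (AdjoinRoot.root _) (AdjoinRoot.mk _ y) (by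
      rw [← AdjoinRoot.mk_X, ← map_mul, ← map_one (AdjoinRoot.mk _)]
      exact AdjoinRoot.mk_eq_mk.2 hy)
  have hu : aeval (u : AdjoinRoot (tildePoly σ f)) (tildePoly σ f) = 0 := by
    rw [← AdjoinRoot.mk_self]
    exact AdjoinRoot.aeval_eq _
  rw [aeval_tildePoly_eq_zero_iff u h0] at hu
  rw [← AdjoinRoot.mk_eq_zero, ← AdjoinRoot.aeval_eq, aeval_conjComp, AdjoinRoot.aeval_eq]
  exact hu

theorem IsSelfConj.dvd_conjComp (hf : IsSelfConj σ f) (hy : f ∣ X * y - 1) {p : F[X]}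
    (hp : f ∣ p) : f ∣ conjComp σ y p := by
  rw [← hf.2.2] at hy ⊢
  exact tildePoly_dvd_conjComp hf.2.1 hy hp

theorem IsSelfConj.dvd_mul_conjComp_sub_one (hf : IsSelfConj σ f) (hy : f ∣ X * y - 1) :
    f ∣ y * conjComp σ y y - 1 := by
  simpa only [map_sub, map_mul, map_one, conjComp_X] using hf.dvd_conjComp hy hy

theorem IsSelfConj.dvd_conjComp_conjComp_sub (hσ : Function.Involutive σ) (hf : IsSelfConj σ f)
    (hy : f ∣ X * y - 1) (p : F[X]) : f ∣ conjComp σ y (conjComp σ y p) - p := by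
  have hyX : f ∣ conjComp σ y y - X := by
    convert dvd_sub ((hf.dvd_mul_conjComp_sub_one hy).mul_left X)
      (hy.mul_right (conjComp σ y y)) using 1
    ring
  have hcomp : conjComp σ y (conjComp σ y p) = p.comp (conjComp σ y y) := by
    rw [conjComp_apply, conjComp_apply, Polynomial.map_comp, Polynomial.map_map,
      show σ.comp σ = RingHom.id F from RingHom.ext hσ, Polynomial.map_id, comp_assoc,
      conjComp_apply]
  rw [← AdjoinRoot.mk_eq_mk, ← AdjoinRoot.aeval_eq, ← AdjoinRoot.aeval_eq] at hyX ⊢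
  rw [hcomp, aeval_comp, hyX, aeval_X]

end ConjComp

/-! ### Unitary powers modulo a self-conjugate polynomial -/

section IsUnitaryPower

variable {F : Type*} [Field F] {σ : F →+* F} {M : ℕ} {f g y : F[X]}

/-- The condition on the characteristic polynomial `f` of a cyclic unitary matrix for that matrix
to be an `M`-th power in the unitary group: the class of `X` in `F[X] / (f)` is the `M`-th power of
a unitary element `b`. Here `y` is an inverse of `X` modulo `f`, so `conjComp σ y` induces the
involution of `F[X] / (f)`. -/
def IsUnitaryPower (σ : F →+* F) (M : ℕ) (f : F[X]) : Prop :=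
  IsSelfConj σ f ∧ ∃ y b, f ∣ X * y - 1 ∧ f ∣ b ^ M - X ∧ f ∣ b * conjComp σ y b - 1

theorem IsUnitaryPower.exists_dvd (h : IsUnitaryPower σ M f) (hy : f ∣ X * y - 1) :
    ∃ b, f ∣ b ^ M - X ∧ f ∣ b * conjComp σ y b - 1 := by
  obtain ⟨-, y', b, hy', hb, hbb⟩ := h
  have hyy' : f ∣ y - y' := by
    convert dvd_sub (hy.mul_left y') (hy'.mul_left y) using 1
    ring
  refine ⟨b, hb, ?_⟩
  convert dvd_add hbb ((dvd_conjComp_sub_conjComp (σ := σ) hyy' b).mul_left b) using 1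
  ring

theorem IsUnitaryPower.of_dvd (hf : IsUnitaryPower σ M f) (hg : IsSelfConj σ g) (h : g ∣ f) :
    IsUnitaryPower σ M g := by
  obtain ⟨-, y, b, hy, hb, hbb⟩ := hf
  exact ⟨hg, y, b, h.trans hy, h.trans hb, h.trans hbb⟩

theorem isUnitaryPower_one : IsUnitaryPower σ M 1 :=
  ⟨isSelfConj_one, 1, 1, one_dvd _, one_dvd _, one_dvd _⟩

theorem exists_le_pow_eq_mul_add_one {p : ℕ} (hMp : M.Coprime p) (hp : 1 < p) (k : ℕ) :
    ∃ N m, k ≤ p ^ N ∧ p ^ N = M * m + 1 := by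
  have hM : M ≠ 0 := by
    rintro rfl
    exact hp.ne' ((Nat.coprime_zero_left p).1 hMp)
  have hmod : 1 ≡ p ^ (k * M.totient) [MOD M] := by
    rw [pow_mul]
    exact (Nat.ModEq.pow_totient (hMp.symm.pow_left k)).symm
  have hq : 1 ≤ p ^ (k * M.totient) := Nat.one_le_pow _ _ (zero_lt_one.trans hp)
  obtain ⟨m, hm⟩ := (Nat.modEq_iff_dvd' hq).1 hmod
  exact ⟨k * M.totient, m, (Nat.le_mul_of_pos_right k (Nat.totient_pos.2 hM.bot_lt)).trans
    (Nat.lt_pow_self hp).le, by rw [← hm, Nat.sub_add_cancel hq]⟩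

/-- A power `p ^ N = M * m + 1` of the characteristic turns a solution `b` modulo `f` into the
solution `b ^ p ^ N * y ^ m` modulo `f ^ p ^ N`. -/
theorem IsUnitaryPower.pow {p : ℕ} [Fact p.Prime] [CharP F p] (hMp : M.Coprime p)
    (hf : IsUnitaryPower σ M f) (k : ℕ) : IsUnitaryPower σ M (f ^ k) := by
  obtain ⟨N, m, hk, hm⟩ := exists_le_pow_eq_mul_add_one hMp (Fact.out : p.Prime).one_lt k
  have hfq := hf.1.pow (p ^ N)
  refine IsUnitaryPower.of_dvd (f := f ^ p ^ N) ⟨hfq, ?_⟩ (hf.1.pow k) (pow_dvd_pow f hk)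
  obtain ⟨y, hy⟩ := exists_dvd_X_mul_sub_one hfq.2.1
  obtain ⟨b, hb, hbb⟩ := hf.exists_dvd ((dvd_pow_self f (by omega)).trans hy)
  have hyy := hfq.dvd_mul_conjComp_sub_one hy
  have hbq := pow_dvd_pow_of_dvd hb (p ^ N)
  have hbbq := pow_dvd_pow_of_dvd hbb (p ^ N)
  refine ⟨y, b ^ p ^ N * y ^ m, hy, ?_⟩
  rw [sub_pow_char_pow] at hbq hbbq
  rw [← AdjoinRoot.mk_eq_mk] at hy hbq hbbq hyy ⊢
  rw [← AdjoinRoot.mk_eq_mk]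
  simp only [map_mul, map_pow, map_one, one_pow, mul_pow] at hy hbq hbbq hyy ⊢
  constructor
  · have hXq := congrArg (AdjoinRoot.mk (f ^ p ^ N) X ^ ·) hm
    rw [pow_succ'] at hXq
    rw [pow_right_comm, hbq, hXq, pow_right_comm, ← pow_mul, mul_assoc, ← mul_pow, hy, one_pow,
      mul_one]
  · rw [mul_mul_mul_comm, hbbq, ← mul_pow, hyy, one_pow, one_mul]

theorem exists_dvd_sub_and_dvd_sub {R : Type*} [CommRing R] {a b : R} (h : IsCoprime a b)
    (s t : R) : ∃ r, a ∣ r - s ∧ b ∣ r - t := by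
  obtain ⟨u, v, huv⟩ := h
  exact ⟨s * (v * b) + t * (u * a), ⟨u * (t - s), by linear_combination s * huv⟩,
    ⟨v * (s - t), by linear_combination t * huv⟩⟩

theorem IsUnitaryPower.mul (hf : IsUnitaryPower σ M f) (hg : IsUnitaryPower σ M g)
    (hfg : IsCoprime f g) : IsUnitaryPower σ M (f * g) := by
  have hself := hf.1.mul hg.1
  obtain ⟨y, hy⟩ := exists_dvd_X_mul_sub_one hself.2.1
  have hyf := dvd_of_mul_right_dvd hy
  have hyg := dvd_of_mul_left_dvd hy
  obtain ⟨c, hc, hcc⟩ := hf.exists_dvd hyf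
  obtain ⟨d, hd, hdd⟩ := hg.exists_dvd hyg
  obtain ⟨b, hbc, hbd⟩ := exists_dvd_sub_and_dvd_sub hfg c d
  have hbc' := hf.1.dvd_conjComp hyf hbc
  have hbd' := hg.1.dvd_conjComp hyg hbd
  refine ⟨hself, y, b, hy, hfg.mul_dvd ?_ ?_, hfg.mul_dvd ?_ ?_⟩
  all_goals
    simp only [map_sub, ← AdjoinRoot.mk_eq_mk, map_mul, map_pow] at *
    simp only [*]

/-- Modulo `g̃` the congruence is solved by the element `X * conjComp σ y b ^ (M - 1)`, which is
dictated by a solution `b` modulo `g`. -/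
theorem isUnitaryPower_mul_tildePoly_iff (hσ : Function.Involutive σ) (hM : M ≠ 0) (hg : g.Monic)
    (h0 : g.coeff 0 ≠ 0) (hcop : IsCoprime g (tildePoly σ g)) :
    IsUnitaryPower σ M (g * tildePoly σ g) ↔ ∃ b, g ∣ b ^ M - X := by
  have hself := isSelfConj_mul_tildePoly hσ hg h0
  refine ⟨fun ⟨_, _, b, _, hb, _⟩ => ⟨b, dvd_of_mul_right_dvd hb⟩, fun ⟨c, hc⟩ => ⟨hself, ?_⟩⟩
  obtain ⟨m, rfl⟩ := Nat.exists_eq_succ_of_ne_zero hM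
  obtain ⟨y, hy⟩ := exists_dvd_X_mul_sub_one hself.2.1
  obtain ⟨b, hbc, hbd⟩ := exists_dvd_sub_and_dvd_sub hcop c (X * conjComp σ y c ^ m)
  have hyg := dvd_of_mul_right_dvd hy
  have hyt := dvd_of_mul_left_dvd hy
  have hc' := tildePoly_dvd_conjComp h0 hyt hc
  have hbc' := tildePoly_dvd_conjComp h0 hyt hbc
  have hbb : tildePoly σ g ∣ b * conjComp σ y b - 1 := by
    simp only [map_sub, ← AdjoinRoot.mk_eq_mk, map_mul, map_pow, conjComp_X, map_one]
      at hbd hbc' hc' hyt ⊢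
    rw [hbd, hbc', mul_assoc, ← pow_succ, hc', hyt]
  refine ⟨y, b, hy, hcop.mul_dvd ?_ ?_, hcop.mul_dvd ?_ hbb⟩
  · simp only [← AdjoinRoot.mk_eq_mk, map_pow] at hbc hc ⊢
    rw [hbc, hc]
  · simp only [map_sub, ← AdjoinRoot.mk_eq_mk, map_mul, map_pow, conjComp_X, map_one]
      at hbd hc' hyt ⊢
    rw [hbd, mul_pow, pow_right_comm, hc', pow_succ', mul_assoc, ← mul_pow, hyt, one_pow, mul_one]
  · have htt := tildePoly_tildePoly hσ hg h0
    have hbb' : g ∣ conjComp σ y (b * conjComp σ y b - 1) := by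
      rw [← htt] at hyg
      rw [← htt]
      exact tildePoly_dvd_conjComp (coeff_zero_tildePoly_ne_zero hg h0) hyg hbb
    have hconj := dvd_of_mul_right_dvd (hself.dvd_conjComp_conjComp_sub hσ hy b)
    simp only [map_sub, ← AdjoinRoot.mk_eq_mk, map_mul, map_one] at hbb' hconj ⊢
    rw [mul_comm, ← hbb', hconj]

end IsUnitaryPower

/-! ### Power polynomials -/

section PowerPoly

open IntermediateField

variable {F : Type*} [Field F] {σ : F →+* F} {M : ℕ} {f g y b : F[X]}

section Minpoly

variable {K : Type*} [Field K] [Algebra F K] {x : K}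

theorem natDegree_minpoly_pow_eq_iff (hx : IsIntegral F x) :
    (minpoly F (x ^ M)).natDegree = (minpoly F x).natDegree ↔
      ∃ b : F[X], aeval (x ^ M) b = x := by
  have hle : F⟮x ^ M⟯ ≤ F⟮x⟯ :=
    adjoin_simple_le_iff.2 (pow_mem (mem_adjoin_simple_self F x) M)
  have hmem : x ∈ F⟮x ^ M⟯ ↔ ∃ b : F[X], aeval (x ^ M) b = x := by
    rw [← mem_toSubalgebra,
      adjoin_simple_toSubalgebra_of_isAlgebraic (hx.pow M).isAlgebraic,
      Algebra.adjoin_singleton_eq_range_aeval]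
    rfl
  rw [← adjoin.finrank hx, ← adjoin.finrank (hx.pow M), ← hmem]
  have := adjoin.finiteDimensional hx
  refine ⟨fun h => ?_, fun h => ?_⟩
  · rw [eq_of_le_of_finrank_eq hle h]
    exact mem_adjoin_simple_self F x
  · rw [le_antisymm hle (adjoin_simple_le_iff.2 h)]

theorem aeval_inv_map_eq_zero (hx : IsIntegral F x) (hx0 : x ≠ 0)
    (ht : tildePoly σ (minpoly F x) = minpoly F x) {p : F[X]} (hp : aeval x p = 0) :
    aeval x⁻¹ (p.map σ) = 0 := by
  have hmin : aeval x⁻¹ ((minpoly F x).map σ) = 0 := by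
    have h := aeval_tildePoly_eq_zero_iff (σ := σ) (Units.mk0 x hx0)
      (minpoly.coeff_zero_ne_zero hx hx0)
    rw [ht, Units.val_inv_eq_inv_val, Units.val_mk0] at h
    exact h.1 (minpoly.aeval F x)
  obtain ⟨k, rfl⟩ := minpoly.dvd F x hp
  rw [Polynomial.map_mul, map_mul, hmin, zero_mul]

theorem tildePoly_minpoly_eq (hx : IsIntegral F x) (hx0 : x ≠ 0)
    (h : aeval x⁻¹ ((minpoly F x).map σ) = 0) : tildePoly σ (minpoly F x) = minpoly F x := by
  have h0 := minpoly.coeff_zero_ne_zero hx hx0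
  have hx' := (aeval_tildePoly_eq_zero_iff (σ := σ) (Units.mk0 x hx0) h0).2
    (by rwa [Units.val_inv_eq_inv_val, Units.val_mk0])
  exact eq_of_monic_of_dvd_of_natDegree_le (minpoly.monic hx) (monic_tildePoly h0)
    (minpoly.dvd F x hx') (natDegree_tildePoly h0).le

theorem dvd_mul_conjComp_sub_one_iff (hx : IsIntegral F x) (hx0 : x ≠ 0)
    (ht : tildePoly σ (minpoly F (x ^ M)) = minpoly F (x ^ M))
    (hy : minpoly F (x ^ M) ∣ X * y - 1) (hb : aeval (x ^ M) b = x) :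
    minpoly F (x ^ M) ∣ b * conjComp σ y b - 1 ↔ tildePoly σ (minpoly F x) = minpoly F x := by
  have hyx : aeval (x ^ M) y = (x ^ M)⁻¹ := by
    rw [minpoly.dvd_iff, map_sub, map_mul, aeval_X, map_one, sub_eq_zero] at hy
    exact eq_inv_of_mul_eq_one_right hy
  rw [minpoly.dvd_iff, map_sub, map_mul, map_one, sub_eq_zero, aeval_conjComp, hb, hyx,
    mul_eq_one_iff_inv_eq₀ hx0]
  refine ⟨fun h => tildePoly_minpoly_eq hx hx0 ?_, fun h => ?_⟩
  · have hcomp : aeval (x ^ M) ((minpoly F x).comp b) = 0 := by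
      rw [aeval_comp, hb, minpoly.aeval]
    have := aeval_inv_map_eq_zero (hx.pow M) (pow_ne_zero M hx0) ht hcomp
    rwa [Polynomial.map_comp, aeval_comp, ← h] at this
  · have hcomp : aeval x (b.comp (X ^ M) - X) = 0 := by
      rw [map_sub, aeval_comp, map_pow, aeval_X, hb, sub_self]
    have := aeval_inv_map_eq_zero hx hx0 h hcomp
    rw [eq_comm, ← sub_eq_zero]
    rwa [Polynomial.map_sub, Polynomial.map_comp, Polynomial.map_pow, map_X, map_sub, aeval_comp,
      map_pow, aeval_X, inv_pow] at this

theorem minpoly_dvd_comp_X_pow_iff (hf : f.Monic) (hi : Irreducible f) :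
    minpoly F x ∣ f.comp (X ^ M) ↔ minpoly F (x ^ M) = f := by
  rw [minpoly.dvd_iff, aeval_comp, map_pow, aeval_X]
  refine ⟨fun h => (minpoly.eq_of_irreducible_of_monic hi h hf).symm, ?_⟩
  rintro rfl
  exact minpoly.aeval F (x ^ M)

end Minpoly

theorem adjoinRoot_mk_pow (hb : f ∣ b ^ M - X) : AdjoinRoot.mk f b ^ M = AdjoinRoot.root f := by
  rw [← map_pow, ← AdjoinRoot.mk_X, AdjoinRoot.mk_eq_mk]
  exact hb

theorem minpoly_adjoinRoot_root (hf : f.Monic) (hi : Irreducible f) :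
    minpoly F (AdjoinRoot.root f) = f := by
  rw [AdjoinRoot.minpoly_root hi.ne_zero, hf.leadingCoeff, inv_one, C_1, mul_one]

theorem exists_dvd_pow_sub_X_and_aeval_eq (hf : f.Monic) (hi : Irreducible f) (hg : Irreducible g)
    (hdeg : g.natDegree = f.natDegree) (hdvd : g ∣ f.comp (X ^ M)) :
    minpoly F (AdjoinRoot.root g ^ M) = f ∧
      ∃ b, f ∣ b ^ M - X ∧ aeval (AdjoinRoot.root g ^ M) b = AdjoinRoot.root g := by
  have := Fact.mk hg
  have hmin : minpoly F (AdjoinRoot.root g ^ M) = f := by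
    rwa [← minpoly_dvd_comp_X_pow_iff hf hi, minpoly.dvd_iff, AdjoinRoot.aeval_eq,
      AdjoinRoot.mk_eq_zero]
  obtain ⟨b, hb⟩ := (natDegree_minpoly_pow_eq_iff (AdjoinRoot.isIntegral_root hg.ne_zero)).1 (by
    rw [hmin, AdjoinRoot.minpoly_root hg.ne_zero, natDegree_mul_C
      (inv_ne_zero (leadingCoeff_ne_zero.2 hg.ne_zero)), hdeg])
  refine ⟨hmin, b, ?_, hb⟩
  rw [← hmin, minpoly.dvd_iff, map_sub, map_pow, hb, aeval_X, sub_self]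

theorem isIntegral_adjoinRoot (hf : f.Monic) (x : AdjoinRoot f) : IsIntegral F x :=
  have := hf.finite_adjoinRoot
  IsIntegral.of_finite F x

theorem natDegree_minpoly_mk_eq_and_dvd (hf : f.Monic) [hi : Fact (Irreducible f)]
    (hb : f ∣ b ^ M - X) : (minpoly F (AdjoinRoot.mk f b)).natDegree = f.natDegree ∧
      minpoly F (AdjoinRoot.mk f b) ∣ f.comp (X ^ M) := by
  have hmin : minpoly F (AdjoinRoot.mk f b ^ M) = f := by
    rw [adjoinRoot_mk_pow hb, minpoly_adjoinRoot_root hf hi.out]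
  refine ⟨?_, (minpoly_dvd_comp_X_pow_iff hf hi.out).2 hmin⟩
  rw [← (natDegree_minpoly_pow_eq_iff (isIntegral_adjoinRoot hf _)).2 ⟨b, ?_⟩, hmin]
  rw [adjoinRoot_mk_pow hb, AdjoinRoot.aeval_eq]

theorem isMPowerPoly_iff :
    IsMPowerPoly M f ↔ f.Monic ∧ Irreducible f ∧ ∃ b, f ∣ b ^ M - X := by
  refine and_congr_right fun hf => and_congr_right fun hi => ⟨?_, ?_⟩
  · rintro ⟨g, hg, hdeg, hdvd⟩
    obtain ⟨-, b, hb, -⟩ := exists_dvd_pow_sub_X_and_aeval_eq hf hi hg hdeg hdvd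
    exact ⟨b, hb⟩
  · rintro ⟨b, hb⟩
    have := Fact.mk hi
    exact ⟨_, minpoly.irreducible (isIntegral_adjoinRoot hf _),
      natDegree_minpoly_mk_eq_and_dvd hf hb⟩

theorem isMtildePowerPoly_iff :
    IsMtildePowerPoly σ M f ↔ Irreducible f ∧ IsUnitaryPower σ M f := by
  rw [IsMtildePowerPoly, isSCIM_iff, IsUnitaryPower, and_assoc]
  refine and_congr_right fun hi => and_congr_right fun hf => ⟨?_, ?_⟩
  · rintro ⟨g, ⟨hgm, hg, hg0, hgt⟩, hdeg, hdvd⟩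
    have := Fact.mk hg
    obtain ⟨hmin, b, hb, hbx⟩ := exists_dvd_pow_sub_X_and_aeval_eq hf.1 hi hg hdeg hdvd
    obtain ⟨y, hy⟩ := exists_dvd_X_mul_sub_one hf.2.1
    have hx0 : AdjoinRoot.root g ≠ 0 := fun h => hg0 <| by
      rw [← minpoly_adjoinRoot_root hgm hg, h, minpoly.zero, coeff_X_zero]
    refine ⟨y, b, hy, hb, ?_⟩
    rw [← hmin] at hy ⊢
    rw [dvd_mul_conjComp_sub_one_iff (isIntegral_adjoinRoot hgm _) hx0 (by rw [hmin, hf.2.2]) hy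
      hbx, minpoly_adjoinRoot_root hgm hg, hgt]
  · rintro ⟨y, b, hy, hb, hbb⟩
    have := Fact.mk hi
    have hx := isIntegral_adjoinRoot hf.1 (AdjoinRoot.mk f b)
    have hmin : minpoly F (AdjoinRoot.mk f b ^ M) = f := by
      rw [adjoinRoot_mk_pow hb, minpoly_adjoinRoot_root hf.1 hi]
    have hx0 : AdjoinRoot.mk f b ≠ 0 := by
      rw [← AdjoinRoot.mk_eq_mk, map_mul, map_one] at hbb
      exact left_ne_zero_of_mul_eq_one hbb
    refine ⟨_, ⟨minpoly.monic hx, minpoly.irreducible hx, minpoly.coeff_zero_ne_zero hx hx0, ?_⟩,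
      natDegree_minpoly_mk_eq_and_dvd hf.1 hb⟩
    rw [← hmin] at hy hbb
    rwa [dvd_mul_conjComp_sub_one_iff hx hx0 (by rw [hmin, hf.2.2]) hy] at hbb
    rw [adjoinRoot_mk_pow hb, AdjoinRoot.aeval_eq]

end PowerPoly

/-! ### Conjugacy classes of cyclic powers -/

section ConjClasses

variable {F : Type*} [Field F] {σ : F →+* F} {M n : ℕ}

theorem unitaryAdjoint_eq_inv {A : GL (Fin n) F} (hA : A ∈ unitaryGrp σ n) :
    unitaryAdjoint σ (A : Matrix (Fin n) (Fin n) F) = ↑A⁻¹ :=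
  (Units.inv_eq_of_mul_eq_one_right (mem_unitaryGrp_iff.1 hA)).symm

theorem exists_pow_eq_iff {A : unitaryGrp σ n} (hA : IsCyclicMat A.1.1) :
    (∃ B : unitaryGrp σ n, B ^ M = A) ↔ IsUnitaryPower σ M A.1.1.charpoly := by
  have hself : IsSelfConj σ A.1.1.charpoly := ⟨charpoly_monic _,
    isUnit_iff_charpoly_coeff_zero_ne_zero.1 A.1.isUnit,
    tildePoly_charpoly_of_mem_unitaryGrp A.2⟩
  obtain ⟨y, hy⟩ := exists_dvd_X_mul_sub_one hself.2.1
  have hyA : aeval A.1.1 y = unitaryAdjoint σ A.1.1 := by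
    rw [hA.charpoly_dvd_iff, map_sub, sub_eq_zero, map_one, map_mul, aeval_X] at hy
    rw [unitaryAdjoint_eq_inv A.2]
    exact (Units.inv_eq_of_mul_eq_one_right hy).symm
  have hconj (p : F[X]) : aeval A.1.1 (conjComp σ y p) = unitaryAdjoint σ (aeval A.1.1 p) := by
    rw [aeval_conjComp, hyA, unitaryAdjoint_aeval]
  refine ⟨fun ⟨B, hB⟩ => ⟨hself, y, ?_⟩, fun h => ?_⟩
  · have hBA : B.1.1 ^ M = A.1.1 := by rw [← hB]; rfl
    obtain ⟨b, hb⟩ := hA.exists_aeval_eq_of_commute (B := B.1.1)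
      (by rw [← hBA]; exact (Commute.refl _).pow_left M)
    refine ⟨b, hy, ?_, ?_⟩
    · rw [hA.charpoly_dvd_iff, map_sub, map_pow, hb, aeval_X, hBA, sub_self]
    · rw [hA.charpoly_dvd_iff, map_sub, map_mul, hconj, hb, mem_unitaryGrp_iff.1 B.2, map_one,
        sub_self]
  · obtain ⟨b, hb, hbb⟩ := h.exists_dvd hy
    rw [hA.charpoly_dvd_iff, map_sub, map_pow, aeval_X, sub_eq_zero] at hb
    rw [hA.charpoly_dvd_iff, map_sub, map_mul, hconj, map_one, sub_eq_zero] at hbb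
    obtain ⟨B, hB⟩ := IsUnit.of_mul_eq_one _ hbb
    refine ⟨⟨B, mem_unitaryGrp_iff.2 (by rw [hB, hbb])⟩, Subtype.ext (Units.ext ?_)⟩
    exact (congrArg (· ^ M) hB).trans hb

theorem charpoly_eq_of_isConj {A B : unitaryGrp σ n} (h : IsConj A B) :
    A.1.1.charpoly = B.1.1.charpoly := by
  obtain ⟨C, rfl⟩ := isConj_iff.1 h
  have h := charpoly_units_conj C.1 A.1.1
  rw [← coe_units_inv] at h
  exact h.symm

theorem isCyclicMat_of_isConj {A B : unitaryGrp σ n} (h : IsConj A B) (hA : IsCyclicMat A.1.1) :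
    IsCyclicMat B.1.1 := by
  obtain ⟨C, rfl⟩ := isConj_iff.1 h
  exact hA.conj C.1

theorem isConj_of_charpoly_eq [Finite F] (hσ : Function.Involutive σ) {l : F} (hl : σ l ≠ l)
    {A B : unitaryGrp σ n} (hA : IsCyclicMat A.1.1) (hB : IsCyclicMat B.1.1)
    (h : A.1.1.charpoly = B.1.1.charpoly) : IsConj A B := by
  obtain ⟨P, hP, hPAB⟩ := hA.exists_mul_eq_mul hB h
  obtain ⟨Q, hQ, hQAB⟩ := exists_conj_eq_of_mem_unitaryGrp hσ hl A.2 B.2 hP hPAB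
  exact isConj_iff.2 ⟨⟨Q, hQ⟩, Subtype.ext hQAB⟩

theorem numCycPowerClasses_eq_card [Finite F] (hσ : Function.Involutive σ) {l : F} (hl : σ l ≠ l) :
    numCycPowerClasses σ M n =
      Nat.card {f : F[X] // IsUnitaryPower σ M f ∧ f.natDegree = n} := by
  choose A hA using fun f : {f : F[X] // IsUnitaryPower σ M f ∧ f.natDegree = n} =>
    exists_isCyclicMat_mem_unitaryGrp hσ hl f.2.1.1.1 f.2.1.1.2.1 f.2.1.1.2.2 f.2.2
  symm
  refine Nat.card_eq_of_bijective (fun f => (⟨ConjClasses.mk ⟨A f, (hA f).1⟩, fun B hB => ?_⟩ :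
    {c : ConjClasses (unitaryGrp σ n) // ∀ A ∈ c.carrier,
      IsCyclicMat ((A : GL (Fin n) F) : Matrix (Fin n) (Fin n) F) ∧
        ∃ B : unitaryGrp σ n, B ^ M = A})) ⟨fun f g hfg => ?_, fun ⟨c, hc⟩ => ?_⟩
  · rw [ConjClasses.mem_carrier_iff_mk_eq, ConjClasses.mk_eq_mk_iff_isConj] at hB
    have hcyc := isCyclicMat_of_isConj hB.symm (hA f).2.1
    refine ⟨hcyc, (exists_pow_eq_iff hcyc).2 ?_⟩
    rw [charpoly_eq_of_isConj hB, (hA f).2.2]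
    exact f.2.1
  · have h := charpoly_eq_of_isConj (ConjClasses.mk_eq_mk_iff_isConj.1 (congrArg Subtype.val hfg))
    exact Subtype.ext ((hA f).2.2.symm.trans (h.trans (hA g).2.2))
  · obtain ⟨B, rfl⟩ := ConjClasses.exists_rep c
    obtain ⟨hcyc, hB⟩ := hc B ConjClasses.mem_carrier_mk
    let f : {f : F[X] // IsUnitaryPower σ M f ∧ f.natDegree = n} :=
      ⟨B.1.1.charpoly, (exists_pow_eq_iff hcyc).1 hB, by
        rw [charpoly_natDegree_eq_dim, Fintype.card_fin]⟩
    exact ⟨f, Subtype.ext (ConjClasses.mk_eq_mk_iff_isConj.2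
      (isConj_of_charpoly_eq hσ hl (hA f).2.1 hcyc (hA f).2.2))⟩

end ConjClasses

/-! ### Degrees of SCIM polynomials over finite fields -/

section OddDegree

variable {F : Type*} [Field F] [Fintype F]

theorem odd_finrank_of_sq_eq_frobenius {K : Type*} [Field K] [Finite K] [Algebra F K]
    {s : Gal(K/F)} (hs : s ^ 2 = FiniteField.frobeniusAlgEquivOfAlgebraic F K) :
    Odd (Module.finrank F K) := by
  obtain ⟨⟨i, _⟩, rfl⟩ := (FiniteField.bijective_frobeniusAlgEquivOfAlgebraic_pow F K).2 s
  have hi : i * 2 ≡ 1 [MOD Module.finrank F K] := by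
    rw [← FiniteField.orderOf_frobeniusAlgEquivOfAlgebraic F K, ← pow_eq_pow_iff_modEq, pow_mul,
      pow_one]
    exact hs
  rw [← Nat.coprime_two_left]
  exact Nat.Coprime.coprime_mul_left (hi.gcd_eq.trans (Nat.gcd_one_left _))

variable {σ : F →+* F} {p ℓ : ℕ} [Fact p.Prime] [CharP F p]

theorem aeval_map_pow_eq {K : Type*} [Field K] [Algebra F K] (hF : Fintype.card F = (p ^ ℓ) ^ 2)
    (hσ : ∀ x : F, σ x = x ^ p ^ ℓ) (x : K) (f : F[X]) :
    aeval x (f.map σ) ^ p ^ ℓ = aeval (x ^ p ^ ℓ) f := by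
  have := charP_of_injective_algebraMap (algebraMap F K).injective p
  have hcomp : ((iterateFrobenius K p ℓ).comp (algebraMap F K)).comp σ = algebraMap F K := by
    ext a
    rw [RingHom.comp_apply, RingHom.comp_apply, iterateFrobenius_def, hσ, ← map_pow, ← pow_mul,
      ← sq, ← hF, FiniteField.pow_card]
  rw [← iterateFrobenius_def, aeval_def, hom_eval₂, eval₂_map, hcomp, iterateFrobenius_def,
    aeval_def]

/-- If `θ` is a root of `f`, so is `(θ⁻¹) ^ q`. The automorphism sending `θ` to this root is a
square root of the Frobenius automorphism, so it generates a Galois group of odd order. -/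
theorem IsSCIM.odd_natDegree (hF : Fintype.card F = (p ^ ℓ) ^ 2) (hσ : ∀ x : F, σ x = x ^ p ^ ℓ)
    {f : F[X]} (hf : IsSCIM σ f) : Odd f.natDegree := by
  obtain ⟨hm, hi, h0, ht⟩ := hf
  have := Fact.mk hi
  have := hm.finite_adjoinRoot
  have : Finite (AdjoinRoot f) := Module.finite_of_finite F
  set θ := AdjoinRoot.root f
  have hmin : minpoly F θ = f := minpoly_adjoinRoot_root hm hi
  have hθ0 : θ ≠ 0 := fun h => h0 (by rw [← hmin, h, minpoly.zero, coeff_X_zero])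
  have hroot : aeval (θ⁻¹ ^ p ^ ℓ) f = 0 := by
    have hθ : aeval θ⁻¹ (f.map σ) = 0 := aeval_inv_map_eq_zero (isIntegral_adjoinRoot hm θ) hθ0
      (by rw [hmin, ht]) (by rw [AdjoinRoot.aeval_eq, AdjoinRoot.mk_self])
    rw [← aeval_map_pow_eq hF hσ, hθ, zero_pow (pow_ne_zero _ (Fact.out : p.Prime).ne_zero)]
  let s : Gal(AdjoinRoot f/F) := AlgEquiv.ofBijective
    (AdjoinRoot.liftAlgHom f (Algebra.ofId F _) (θ⁻¹ ^ p ^ ℓ) hroot) (AlgHom.bijective _)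
  have hs : s θ = θ⁻¹ ^ p ^ ℓ := AdjoinRoot.liftAlgHom_root f (Algebra.ofId F _) _ hroot
  have hss : s ^ 2 = FiniteField.frobeniusAlgEquivOfAlgebraic F (AdjoinRoot f) := by
    have : (s ^ 2 : Gal(AdjoinRoot f/F)).toAlgHom =
        (FiniteField.frobeniusAlgEquivOfAlgebraic F (AdjoinRoot f)).toAlgHom := by
      apply AdjoinRoot.algHom_ext
      change (s ^ 2) θ = θ ^ Fintype.card F
      rw [sq, AlgEquiv.mul_apply, hs, map_pow, map_inv₀, hs, inv_pow, inv_pow, inv_pow, inv_inv,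
        ← pow_mul, ← sq, hF]
    exact AlgEquiv.ext fun x => DFunLike.congr_fun this x
  have hodd := odd_finrank_of_sq_eq_frobenius hss
  rwa [(AdjoinRoot.powerBasis hi.ne_zero).finrank, AdjoinRoot.powerBasis_dim] at hodd

end OddDegree

/-! ### Unique factorization of self-conjugate polynomials -/

section IsMinSelfConj

variable {F : Type*} [Field F] {σ : F →+* F} {f g P Q : F[X]}

/-- The irreducible elements of the monoid of self-conjugate polynomials. They need not be
irreducible in `F[X]`, see `isMinSelfConj_iff`. -/
def IsMinSelfConj (σ : F →+* F) (P : F[X]) : Prop :=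
  IsSelfConj σ P ∧ P ≠ 1 ∧ ∀ f, IsSelfConj σ f → f ∣ P → f = 1 ∨ f = P

theorem IsMinSelfConj.not_isUnit (hP : IsMinSelfConj σ P) : ¬IsUnit P :=
  fun h => hP.2.1 (hP.1.1.eq_one_of_isUnit h)

theorem IsMinSelfConj.natDegree_ne_zero (hP : IsMinSelfConj σ P) : P.natDegree ≠ 0 :=
  fun h => hP.2.1 (eq_one_of_monic_natDegree_zero hP.1.1 h)

theorem isSelfConj_normalize_gcd [DecidableEq F] (hf : IsSelfConj σ f) (hg : IsSelfConj σ g) :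
    IsSelfConj σ (normalize (EuclideanDomain.gcd f g)) := by
  set d := normalize (EuclideanDomain.gcd f g)
  have hdf : d ∣ f := normalize_dvd_iff.2 (EuclideanDomain.gcd_dvd_left f g)
  have hdg : d ∣ g := normalize_dvd_iff.2 (EuclideanDomain.gcd_dvd_right f g)
  have hd : d.Monic := monic_normalize fun h => hf.1.ne_zero (EuclideanDomain.gcd_eq_zero_iff.1 h).1
  have hd0 := coeff_zero_ne_zero_of_dvd hdf hf.2.1
  have hdvd : tildePoly σ d ∣ d := dvd_normalize_iff.2 <| EuclideanDomain.dvd_gcd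
    (hf.2.2 ▸ tildePoly_dvd_tildePoly hdf) (hg.2.2 ▸ tildePoly_dvd_tildePoly hdg)
  exact ⟨hd, hd0, (eq_of_monic_of_dvd_of_natDegree_le (monic_tildePoly hd0) hd hdvd
    (natDegree_tildePoly hd0).ge).symm⟩

theorem IsMinSelfConj.isCoprime (hP : IsMinSelfConj σ P) (hQ : IsMinSelfConj σ Q) (hne : P ≠ Q) :
    IsCoprime P Q := by
  classical
  have hd := isSelfConj_normalize_gcd hP.1 hQ.1
  rw [← EuclideanDomain.gcd_isUnit_iff, ← normalize_eq_one]
  by_contra hd1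
  exact hne <| ((hP.2.2 _ hd (normalize_dvd_iff.2 (EuclideanDomain.gcd_dvd_left P Q))).resolve_left
    hd1).symm.trans <|
    (hQ.2.2 _ hd (normalize_dvd_iff.2 (EuclideanDomain.gcd_dvd_right P Q))).resolve_left hd1

theorem IsSelfConj.exists_isMinSelfConj_dvd (hf : IsSelfConj σ f) (h1 : f ≠ 1) :
    ∃ P, IsMinSelfConj σ P ∧ P ∣ f := by
  induction hn : f.natDegree using Nat.strong_induction_on generalizing f with
  | _ n ih =>
  by_cases hmin : ∀ g, IsSelfConj σ g → g ∣ f → g = 1 ∨ g = f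
  · exact ⟨f, ⟨hf, h1, hmin⟩, dvd_rfl⟩
  push Not at hmin
  obtain ⟨g, hg, hgf, hg1, hne⟩ := hmin
  have hlt : g.natDegree < n := by
    by_contra! hle
    exact hne (eq_of_monic_of_dvd_of_natDegree_le hg.1 hf.1 hgf (hn.trans_le hle)).symm
  obtain ⟨P, hP, hPg⟩ := ih _ hlt hg hg1 rfl
  exact ⟨P, hP, hPg.trans hgf⟩

theorem isCoprime_of_monic_of_irreducible (hf : f.Monic) (hg : g.Monic) (hfi : Irreducible f)
    (hgi : Irreducible g) (hne : f ≠ g) : IsCoprime f g :=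
  hfi.coprime_iff_not_dvd.2 fun h =>
    hne (eq_of_monic_of_associated hf hg (hfi.associated_of_dvd hgi h))

theorem isCoprime_tildePoly (hσ : Function.Involutive σ) (hf : f.Monic) (hfi : Irreducible f)
    (h0 : f.coeff 0 ≠ 0) (hne : f ≠ tildePoly σ f) : IsCoprime f (tildePoly σ f) :=
  isCoprime_of_monic_of_irreducible hf (monic_tildePoly h0) hfi
    (irreducible_tildePoly hσ hf h0 hfi) hne

theorem IsSCIM.isMinSelfConj (hf : IsSCIM σ f) : IsMinSelfConj σ f := by
  obtain ⟨hfi, hf⟩ := isSCIM_iff.1 hf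
  refine ⟨hf, hfi.ne_one, fun g hg hgf => ?_⟩
  exact (hfi.dvd_iff.1 hgf).imp hg.1.eq_one_of_isUnit
    fun h => eq_of_monic_of_associated hg.1 hf.1 h.symm

theorem isMinSelfConj_mul_tildePoly (hσ : Function.Involutive σ) (hf : f.Monic)
    (hfi : Irreducible f) (h0 : f.coeff 0 ≠ 0) (hne : f ≠ tildePoly σ f) :
    IsMinSelfConj σ (f * tildePoly σ f) := by
  have hcop := isCoprime_tildePoly hσ hf hfi h0 hne
  have hself := isSelfConj_mul_tildePoly hσ hf h0
  refine ⟨hself, fun h => hfi.not_isUnit (IsUnit.of_mul_eq_one _ h), fun g hg hgf => ?_⟩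
  refine or_iff_not_imp_left.2 fun hg1 => ?_
  obtain ⟨φ, hφ, hφi, hφg⟩ := exists_monic_irreducible_factor g
    fun h => hg1 (hg.1.eq_one_of_isUnit h)
  have hφg' : tildePoly σ φ ∣ g := hg.2.2 ▸ tildePoly_dvd_tildePoly hφg
  have hdvd : f * tildePoly σ f ∣ g := by
    rcases hφi.prime.dvd_or_dvd (hφg.trans hgf) with h | h
    · have heq := eq_of_monic_of_associated hφ hf (hφi.associated_of_dvd hfi h)
      exact hcop.mul_dvd (heq ▸ hφg) (heq ▸ hφg')
    · have heq := eq_of_monic_of_associated hφ (monic_tildePoly h0)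
        (hφi.associated_of_dvd (irreducible_tildePoly hσ hf h0 hfi) h)
      rw [heq, tildePoly_tildePoly hσ hf h0] at hφg'
      exact hcop.mul_dvd hφg' (heq ▸ hφg)
  exact eq_of_monic_of_associated hg.1 hself.1 (associated_of_dvd_dvd hgf hdvd)

theorem isMinSelfConj_iff (hσ : Function.Involutive σ) :
    IsMinSelfConj σ P ↔ IsSCIM σ P ∨ ∃ f : F[X], f.Monic ∧ Irreducible f ∧ f.coeff 0 ≠ 0 ∧
      f ≠ tildePoly σ f ∧ P = f * tildePoly σ f := by
  refine ⟨fun hP => ?_, ?_⟩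
  · obtain ⟨f, hf, hfi, hfP⟩ := exists_monic_irreducible_factor P hP.not_isUnit
    have h0 := coeff_zero_ne_zero_of_dvd hfP hP.1.2.1
    by_cases hne : f = tildePoly σ f
    · have hfP' := (hP.2.2 f ⟨hf, h0, hne.symm⟩ hfP).resolve_left hfi.ne_one
      exact Or.inl (isSCIM_iff.2 ⟨hfP' ▸ hfi, hP.1⟩)
    · have hmul := (isCoprime_tildePoly hσ hf hfi h0 hne).mul_dvd hfP
        (hP.1.2.2 ▸ tildePoly_dvd_tildePoly hfP)
      have hself := isSelfConj_mul_tildePoly hσ hf h0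
      exact Or.inr ⟨f, hf, hfi, h0, hne, ((hP.2.2 _ hself hmul).resolve_left
        fun h => hfi.not_isUnit (IsUnit.of_mul_eq_one _ h)).symm⟩
  · rintro (hP | ⟨f, hf, hfi, h0, hne, rfl⟩)
    · exact hP.isMinSelfConj
    · exact isMinSelfConj_mul_tildePoly hσ hf hfi h0 hne

theorem natDegree_mul_tildePoly (hf : f.Monic) (h0 : f.coeff 0 ≠ 0) :
    (f * tildePoly σ f).natDegree = 2 * f.natDegree := by
  rw [hf.natDegree_mul (monic_tildePoly h0), natDegree_tildePoly h0, two_mul]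

end IsMinSelfConj

section FinsuppProd

variable {R ι : Type*} [CommRing R] [IsDomain R] {a : ι → R}

theorem pow_dvd_finsuppProd_iff (ha0 : ∀ i, a i ≠ 0) (ha : ∀ i, ¬IsUnit (a i))
    (hcop : Pairwise fun i j => IsCoprime (a i) (a j)) (e : ι →₀ ℕ) (i : ι) (k : ℕ) :
    a i ^ k ∣ e.prod (fun j n => a j ^ n) ↔ k ≤ e i := by
  rw [← Finsupp.mul_prod_erase' e i _ fun j => pow_zero (a j)]
  refine ⟨fun h => ?_, fun h => (pow_dvd_pow _ h).mul_right _⟩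
  by_contra! hlt
  have hdvd : a i ^ e i * a i ∣ a i ^ e i * (e.erase i).prod fun j n => a j ^ n :=
    (pow_succ (a i) (e i) ▸ pow_dvd_pow (a i) hlt).trans h
  have hrest : IsCoprime (a i) ((e.erase i).prod fun j n => a j ^ n) :=
    IsCoprime.prod_right fun j hj => (hcop (by
      rintro rfl
      simp at hj)).pow_right
  exact ha i (hrest.isUnit_of_dvd' dvd_rfl
    ((mul_dvd_mul_iff_left (pow_ne_zero _ (ha0 i))).1 hdvd))

theorem finsuppProd_pow_injective (ha0 : ∀ i, a i ≠ 0) (ha : ∀ i, ¬IsUnit (a i))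
    (hcop : Pairwise fun i j => IsCoprime (a i) (a j)) :
    Function.Injective fun e : ι →₀ ℕ => e.prod fun i n => a i ^ n := by
  intro e e' h
  refine Finsupp.ext fun i => eq_of_forall_le_iff fun k => ?_
  rw [← pow_dvd_finsuppProd_iff ha0 ha hcop, ← pow_dvd_finsuppProd_iff ha0 ha hcop]
  exact iff_of_eq (congrArg (a i ^ k ∣ ·) h)

end FinsuppProd

section PrimeFactor

variable {F : Type*} [Field F] {σ : F →+* F} {M : ℕ} {f P : F[X]}

/-- The minimal self-conjugate polynomials that are unitary powers; they index the factors of the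
Euler product. -/
abbrev MinUnitaryPower (σ : F →+* F) (M : ℕ) : Type _ :=
  {P : F[X] // IsMinSelfConj σ P ∧ IsUnitaryPower σ M P}

theorem MinUnitaryPower.pairwise_isCoprime :
    Pairwise fun P Q : MinUnitaryPower σ M => IsCoprime P.1 Q.1 :=
  fun P Q h => P.2.1.isCoprime Q.2.1 (Subtype.coe_ne_coe.2 h)

theorem isUnitaryPower_finsuppProd {p : ℕ} [Fact p.Prime] [CharP F p] (hMp : M.Coprime p)
    (e : MinUnitaryPower σ M →₀ ℕ) : IsUnitaryPower σ M (e.prod fun P k => P.1 ^ k) := by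
  classical
  rw [Finsupp.prod]
  induction e.support using Finset.induction_on with
  | empty => exact isUnitaryPower_one
  | insert P s hP ih =>
    rw [Finset.prod_insert hP]
    refine (P.2.2.pow hMp _).mul ih (IsCoprime.prod_right fun Q hQ => IsCoprime.pow ?_)
    exact MinUnitaryPower.pairwise_isCoprime fun h => hP (h ▸ hQ)

theorem IsUnitaryPower.exists_finsuppProd_eq (hf : IsUnitaryPower σ M f) :
    ∃ e : MinUnitaryPower σ M →₀ ℕ, e.prod (fun P k => P.1 ^ k) = f := by
  induction hn : f.natDegree using Nat.strong_induction_on generalizing f with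
  | _ n ih =>
  by_cases h1 : f = 1
  · exact ⟨0, by rw [Finsupp.prod_zero_index, h1]⟩
  obtain ⟨P, hP, g, rfl⟩ := hf.1.exists_isMinSelfConj_dvd h1
  have hPself : IsSelfConj σ P := hP.1
  have hPpow := hf.of_dvd hPself (Dvd.intro g rfl)
  have hg := hf.of_dvd (hf.1.of_mul hPself) (Dvd.intro_left P rfl)
  have hlt : g.natDegree < n := by
    have := hP.natDegree_ne_zero
    rw [hPself.1.natDegree_mul hg.1.1] at hn
    omega
  obtain ⟨e, he⟩ := ih _ hlt hg rfl
  let Q : MinUnitaryPower σ M := ⟨P, hP, hPpow⟩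
  refine ⟨Finsupp.single Q 1 + e, ?_⟩
  classical
  have hQ : (Finsupp.single Q 1).prod (fun R k => R.1 ^ k) = P :=
    (Finsupp.prod_single_index (h := fun (R : MinUnitaryPower σ M) k => R.1 ^ k)
      (pow_zero Q.1)).trans (pow_one P)
  rw [Finsupp.prod_add_index' (fun _ => pow_zero _) (fun _ _ _ => pow_add _ _ _), he, hQ]

theorem natDegree_finsuppProd (e : MinUnitaryPower σ M →₀ ℕ) :
    (e.prod fun P k => P.1 ^ k).natDegree = Finsupp.weight (fun P => P.1.natDegree) e := by
  rw [Finsupp.prod, natDegree_prod_of_monic _ _ fun P _ => P.2.1.1.1.pow _, Finsupp.weight_apply,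
    Finsupp.sum]
  exact Finset.sum_congr rfl fun P _ => P.2.1.1.1.natDegree_pow _

theorem card_isUnitaryPower_eq_card_weight {p : ℕ} [Fact p.Prime] [CharP F p] (hMp : M.Coprime p)
    (n : ℕ) : Nat.card {f : F[X] // IsUnitaryPower σ M f ∧ f.natDegree = n} =
      Nat.card {e : MinUnitaryPower σ M →₀ ℕ //
        Finsupp.weight (fun P => P.1.natDegree) e = n} := by
  symm
  refine Nat.card_eq_of_bijective (fun e => ⟨e.1.prod fun P k => P.1 ^ k,
    isUnitaryPower_finsuppProd hMp e.1, (natDegree_finsuppProd e.1).trans e.2⟩) ⟨?_, ?_⟩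
  · intro e e' h
    exact Subtype.ext (finsuppProd_pow_injective (fun P => P.2.1.1.1.ne_zero)
      (fun P => P.2.1.not_isUnit) MinUnitaryPower.pairwise_isCoprime (congrArg Subtype.val h))
  · rintro ⟨f, hf, rfl⟩
    obtain ⟨e, rfl⟩ := hf.exists_finsuppProd_eq
    exact ⟨⟨e, (natDegree_finsuppProd e).symm⟩, rfl⟩

theorem NtildeM_eq_card {d : ℕ} (hσ : Function.Involutive σ) (hd : Odd d) :
    NtildeM σ M d = Nat.card {P : MinUnitaryPower σ M // P.1.natDegree = d} := by
  refine Nat.card_congr ((Equiv.subtypeEquivRight fun f => ?_).trans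
    (Equiv.subtypeSubtypeEquivSubtypeInter _ fun P : F[X] => P.natDegree = d).symm)
  rw [isMtildePowerPoly_iff]
  refine ⟨fun ⟨⟨hfi, hf⟩, hdeg⟩ => ⟨⟨IsSCIM.isMinSelfConj (isSCIM_iff.2 ⟨hfi, hf.1⟩), hf⟩, hdeg⟩,
    fun ⟨⟨hmin, hf⟩, hdeg⟩ => ⟨⟨?_, hf⟩, hdeg⟩⟩
  rcases (isMinSelfConj_iff hσ).1 hmin with h | ⟨g, hg, -, h0, -, rfl⟩
  · exact h.2.1
  · rw [← hdeg, natDegree_mul_tildePoly hg h0, ← Nat.not_even_iff_odd] at hd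
    exact absurd (even_two_mul _) hd

theorem sym2_tildePoly_eq_of_mul_eq (hσ : Function.Involutive σ) {f g : F[X]} (hf : f.Monic)
    (hfi : Irreducible f) (hg : g.Monic) (hgi : Irreducible g) (h0 : g.coeff 0 ≠ 0)
    (h : f * tildePoly σ f = g * tildePoly σ g) : s(f, tildePoly σ f) = s(g, tildePoly σ g) := by
  rcases hfi.prime.dvd_or_dvd (h ▸ dvd_mul_right _ _ : f ∣ g * tildePoly σ g) with hd | hd
  · rw [eq_of_monic_of_associated hf hg (hfi.associated_of_dvd hgi hd)]
  · rw [eq_of_monic_of_associated hf (monic_tildePoly h0)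
      (hfi.associated_of_dvd (irreducible_tildePoly hσ hg h0 hgi) hd),
      tildePoly_tildePoly hσ hg h0, Sym2.eq_swap]

theorem IsMPowerPoly.isUnitaryPower_mul_tildePoly (hσ : Function.Involutive σ) (hM : M ≠ 0)
    (hf : IsMPowerPoly M f) (h0 : f.coeff 0 ≠ 0) (hne : f ≠ tildePoly σ f) :
    IsUnitaryPower σ M (f * tildePoly σ f) :=
  (isUnitaryPower_mul_tildePoly_iff hσ hM hf.1 h0 (isCoprime_tildePoly hσ hf.1 hf.2.1 h0 hne)).2
    (isMPowerPoly_iff.1 hf).2.2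

theorem RtildeM_eq_card (hσ : Function.Involutive σ) (hM : M ≠ 0)
    (hodd : ∀ f : F[X], IsSCIM σ f → Odd f.natDegree) (d : ℕ) :
    RtildeM σ M d = Nat.card {P : MinUnitaryPower σ M // P.1.natDegree = 2 * d} := by
  refine Nat.card_eq_of_bijective (fun s => ⟨⟨Sym2.mul s.1, ?_⟩, ?_⟩) ⟨?_, ?_⟩
  · obtain ⟨_, f, hf, h0, -, hne, rfl⟩ := s
    exact ⟨isMinSelfConj_mul_tildePoly hσ hf.1 hf.2.1 h0 hne,
      hf.isUnitaryPower_mul_tildePoly hσ hM h0 hne⟩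
  · obtain ⟨_, f, hf, h0, hdeg, -, rfl⟩ := s
    exact (natDegree_mul_tildePoly hf.1 h0).trans (hdeg ▸ rfl)
  · rintro ⟨_, f, hf, _, _, _, rfl⟩ ⟨_, g, hg, h0, _, _, rfl⟩ h
    exact Subtype.ext (sym2_tildePoly_eq_of_mul_eq hσ hf.1 hf.2.1 hg.1 hg.2.1 h0
      (Subtype.ext_iff.1 (Subtype.ext_iff.1 h)))
  · rintro ⟨⟨P, hmin, hP⟩, hdeg⟩
    rcases (isMinSelfConj_iff hσ).1 hmin with h | ⟨f, hf, hfi, h0, hne, rfl⟩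
    · exact absurd (hodd P h) (Nat.not_odd_iff_even.2 (hdeg ▸ even_two_mul d))
    · have hpow := (isUnitaryPower_mul_tildePoly_iff hσ hM hf h0
        (isCoprime_tildePoly hσ hf hfi h0 hne)).1 hP
      have hdeg' : f.natDegree = d := by
        rw [natDegree_mul_tildePoly hf h0] at hdeg
        omega
      exact ⟨⟨s(f, tildePoly σ f), f, isMPowerPoly_iff.2 ⟨hf, hfi, hpow⟩, h0, hdeg', hne, rfl⟩,
        rfl⟩

theorem finite_setOf_natDegree_le [Finite F] (n : ℕ) : {f : F[X] | f.natDegree ≤ n}.Finite := by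
  have : Finite (degreeLT F (n + 1)) := Finite.of_equiv _ (degreeLTEquiv F (n + 1)).symm.toEquiv
  refine (Set.toFinite (degreeLT F (n + 1) : Set F[X])).subset fun f hf => ?_
  exact mem_degreeLT.2 (degree_le_natDegree.trans_lt (by exact_mod_cast Nat.lt_succ_of_le hf))

end PrimeFactor

/-! ### Euler products of power series -/

section EulerProduct

variable {K ι β : Type*} [Field K] {w : ι → ℕ}

theorem coeff_inv_one_sub_X_pow {w : ℕ} (hw : w ≠ 0) (n : ℕ) :
    PowerSeries.coeff n ((1 - PowerSeries.X ^ w : PowerSeries K)⁻¹) =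
      if w ∣ n then 1 else 0 := by
  have hgeom : PowerSeries.expand w hw (PowerSeries.mk 1) * (1 - PowerSeries.X ^ w) =
      (1 : PowerSeries K) := by
    simpa only [map_mul, map_sub, map_one, PowerSeries.expand_X] using congrArg
      (PowerSeries.expand w hw) (PowerSeries.mk_one_mul_one_sub_eq_one K)
  rw [← PowerSeries.eq_inv_iff_mul_eq_one (by simp [hw])] at hgeom
  rw [← hgeom, PowerSeries.coeff_expand]
  rfl

theorem powerSeries_inv_pow (f : PowerSeries K) (N : ℕ) : (f ^ N)⁻¹ = f⁻¹ ^ N := by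
  induction N with
  | zero => simp
  | succ N ih => rw [pow_succ, PowerSeries.mul_inv_rev, ih, pow_succ']

theorem card_weight_eq_card_filter_dvd [DecidableEq ι] (hw : ∀ i, w i ≠ 0) (S : Finset ι) (n : ℕ) :
    Nat.card {e : ι →₀ ℕ // e.support ⊆ S ∧ Finsupp.weight w e = n} =
      ((S.finsuppAntidiag n).filter fun l => ∀ i ∈ S, w i ∣ l i).card := by
  have hsmul (e : ι →₀ ℕ) (i : ι) : (w • e) i = w i * e i := rfl
  have hmem (e : ι →₀ ℕ) : (e.support ⊆ S ∧ Finsupp.weight w e = n) ↔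
      w • e ∈ (S.finsuppAntidiag n).filter fun l => ∀ i ∈ S, w i ∣ l i := by
    have hsupp : (w • e).support = e.support := by
      ext i
      simp [hsmul, hw]
    rw [Finset.mem_filter, Finset.mem_finsuppAntidiag', Finsupp.sum, Finsupp.weight_apply,
      Finsupp.sum, hsupp]
    simp [hsmul, mul_comm, and_comm]
  have hinj : Function.Injective fun e : ι →₀ ℕ => w • e := fun e e' h =>
    Finsupp.ext fun i => Nat.eq_of_mul_eq_mul_left (hw i).bot_lt (DFunLike.congr_fun h i)
  rw [← Nat.card_eq_finsetCard]
  refine Nat.card_eq_of_bijective (fun e => ⟨w • e.1, (hmem e.1).1 e.2⟩)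
    ⟨fun e e' h => Subtype.ext (hinj (congrArg Subtype.val h)), fun ⟨l, hl⟩ => ?_⟩
  have hdvd (i : ι) : w i ∣ l i := by
    rw [Finset.mem_filter, Finset.mem_finsuppAntidiag] at hl
    by_cases hi : i ∈ S
    · exact hl.2 i hi
    · rw [Finsupp.notMem_support_iff.1 fun h => hi (hl.1.2 h)]
      exact dvd_zero _
  let e : ι →₀ ℕ := Finsupp.onFinset l.support (fun i => l i / w i) fun i hi =>
    Finsupp.mem_support_iff.2 fun h => hi (by rw [h, Nat.zero_div])
  have he : w • e = l := Finsupp.ext fun i => Nat.mul_div_cancel' (hdvd i)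
  exact ⟨⟨e, (hmem e).2 (he ▸ hl)⟩, Subtype.ext he⟩

theorem coeff_prod_inv_one_sub_X_pow (hw : ∀ i, w i ≠ 0) (S : Finset ι) (n : ℕ) :
    PowerSeries.coeff n (∏ i ∈ S, (1 - PowerSeries.X ^ w i : PowerSeries K)⁻¹) =
      Nat.card {e : ι →₀ ℕ // e.support ⊆ S ∧ Finsupp.weight w e = n} := by
  have : DecidableEq ι := Classical.decEq ι
  rw [card_weight_eq_card_filter_dvd hw, PowerSeries.coeff_prod, Finset.card_filter, Nat.cast_sum]
  refine Finset.sum_congr rfl fun l _ => ?_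
  rw [Finset.prod_congr rfl fun i _ => coeff_inv_one_sub_X_pow (hw i) (l i), Finset.prod_ite_zero]
  simp

variable [TopologicalSpace K]

theorem hasProd_inv_one_sub_X_pow (hw : ∀ i, w i ≠ 0) (hfin : ∀ n, {i | w i ≤ n}.Finite) :
    HasProd (fun i => (1 - PowerSeries.X ^ w i : PowerSeries K)⁻¹)
      (PowerSeries.mk fun n => (Nat.card {e : ι →₀ ℕ // Finsupp.weight w e = n} : K)) := by
  refine (PowerSeries.WithPiTopology.tendsto_iff_coeff_tendsto _ _ _ _).2 fun n => ?_
  refine tendsto_const_nhds.congr' ?_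
  filter_upwards [Filter.eventually_ge_atTop (hfin n).toFinset] with S hS
  rw [coeff_prod_inv_one_sub_X_pow hw, PowerSeries.coeff_mk]
  congr 1
  refine Nat.card_congr (Equiv.subtypeEquivRight fun e => (and_iff_right_of_imp ?_).symm)
  rintro rfl i hi
  exact hS ((hfin _).mem_toFinset.2
    (Finsupp.le_weight_of_ne_zero' w (Finsupp.mem_support_iff.1 hi)))

variable [IsTopologicalRing K]

theorem hasProd_inv_one_sub_X_pow_pow_card_fiber {v : β → ℕ} {f : ι → β}
    (hf : ∀ i, v (f i) ≠ 0) (hfin : ∀ n, {i | v (f i) ≤ n}.Finite) :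
    HasProd (fun b => ((1 - PowerSeries.X ^ v b : PowerSeries K) ^ Nat.card {i // f i = b})⁻¹)
      (PowerSeries.mk fun n =>
        (Nat.card {e : ι →₀ ℕ // Finsupp.weight (v ∘ f) e = n} : K)) := by
  have hfiber (b : β) : Finite {i // f i = b} :=
    ((hfin (v b)).subset fun i (hi : f i = b) => (congrArg v hi).le).to_subtype
  have hprod := (Equiv.sigmaFiberEquiv f).hasProd_iff.2
    (hasProd_inv_one_sub_X_pow (K := K) (w := v ∘ f) hf hfin)
  refine hprod.sigma fun b => ?_
  have := Fintype.ofFinite {i // f i = b}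
  have hconst : ∏ i : {i // f i = b}, (1 - PowerSeries.X ^ v (f i) : PowerSeries K)⁻¹ =
      ((1 - PowerSeries.X ^ v b) ^ Nat.card {i // f i = b})⁻¹ := by
    rw [Finset.prod_congr rfl fun i _ => by rw [i.2], Finset.prod_const, Finset.card_univ,
      ← Nat.card_eq_fintype_card, powerSeries_inv_pow]
  exact hconst ▸ hasProd_fintype _

theorem multipliable_inv_one_sub_X_pow_pow {v : β → ℕ} (hv : ∀ b, v b ≠ 0)
    (hfin : ∀ n, {b | v b ≤ n}.Finite) (c : β → ℕ) :
    Multipliable fun b => ((1 - PowerSeries.X ^ v b : PowerSeries K) ^ c b)⁻¹ := by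
  have hfin' (n : ℕ) : {x : Σ b, Fin (c b) | v x.1 ≤ n}.Finite := by
    refine (hfin n).preimage' (f := Sigma.fst) fun b _ => ?_
    exact (Set.finite_range (Sigma.mk b)).subset fun ⟨_, j⟩ h => by cases h; exact ⟨j, rfl⟩
  convert (hasProd_inv_one_sub_X_pow_pow_card_fiber (K := K) (f := Sigma.fst)
    (fun x : Σ b, Fin (c b) => hv x.1) hfin').multipliable using 4 with b
  rw [Nat.card_congr (Equiv.sigmaSubtype b), Nat.card_fin]

theorem multipliable_inv_one_sub_X_pow_pow_of_lt {v : ℕ → ℕ} (hv : ∀ k, k < v k) (c : ℕ → ℕ) :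
    Multipliable fun k => ((1 - PowerSeries.X ^ v k : PowerSeries K) ^ c k)⁻¹ :=
  multipliable_inv_one_sub_X_pow_pow (fun k => (hv k).ne_bot)
    (fun n => (Set.finite_Iio n).subset fun k hk => (hv k).trans_le hk) c

variable [T2Space K]

theorem mk_card_weight_eq_tprod_odd_mul_tprod_even (hw : ∀ i, w i ≠ 0)
    (hfin : ∀ n, {i | w i ≤ n}.Finite) :
    (PowerSeries.mk fun n => (Nat.card {e : ι →₀ ℕ // Finsupp.weight w e = n} : K)) =
      (∏' k : ℕ, ((1 - PowerSeries.X ^ (2 * k + 1) : PowerSeries K) ^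
        Nat.card {i // w i = 2 * k + 1})⁻¹) *
      ∏' k : ℕ, ((1 - PowerSeries.X ^ (2 * (k + 1)) : PowerSeries K) ^
        Nat.card {i // w i = 2 * (k + 1)})⁻¹ := by
  set g : ℕ → PowerSeries K := fun d => ((1 - PowerSeries.X ^ d) ^ Nat.card {i // w i = d})⁻¹
  have hg0 : g (2 * 0) = 1 := by
    have : IsEmpty {i // w i = 2 * 0} := ⟨fun i => hw i.1 i.2⟩
    simp [g]
  have hodd : Multipliable fun k => g (2 * k + 1) :=
    multipliable_inv_one_sub_X_pow_pow_of_lt (fun k => by omega) _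
  have heven : Multipliable fun k => g (2 * (k + 1)) :=
    multipliable_inv_one_sub_X_pow_pow_of_lt (fun k => by omega) _
  have hprod := heven.hasProd.zero_mul (f := fun k => g (2 * k))
  rw [hg0, one_mul] at hprod
  have hall : HasProd g
      (PowerSeries.mk fun n => (Nat.card {e : ι →₀ ℕ // Finsupp.weight w e = n} : K)) :=
    hasProd_inv_one_sub_X_pow_pow_card_fiber (v := id) hw hfin
  rw [hall.unique (hprod.even_mul_odd hodd.hasProd), mul_comm]

end EulerProduct

/-! ### The generating function -/

section GeneratingFunction

variable {F : Type*} [Field F] {σ : F →+* F} {M : ℕ}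

section Frobenius

variable [Fintype F] {q : ℕ}

theorem involutive_of_forall_eq_pow (hF : Fintype.card F = q ^ 2) (hσ : ∀ x, σ x = x ^ q) :
    Function.Involutive σ := fun x => by
  rw [hσ, hσ, ← pow_mul, ← sq, ← hF, FiniteField.pow_card]

theorem exists_ne_of_forall_eq_pow (hF : Fintype.card F = q ^ 2) (hσ : ∀ x, σ x = x ^ q) :
    ∃ l, σ l ≠ l := by
  have hq : 1 < q := (one_lt_pow_iff_of_nonneg (Nat.zero_le q) two_ne_zero).1
    (hF ▸ Fintype.one_lt_card)
  by_contra! hfixed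
  have hne : (X ^ q - X : F[X]) ≠ 0 := FiniteField.X_pow_card_sub_X_ne_zero F hq
  have hcard : Fintype.card F ≤ (X ^ q - X : F[X]).natDegree :=
    Polynomial.card_le_degree_of_subset_roots (Z := Finset.univ) fun x _ => by
      rw [Polynomial.mem_roots hne, IsRoot.def, eval_sub, eval_pow, eval_X, ← hσ, hfixed, sub_self]
  rw [FiniteField.X_pow_card_sub_X_natDegree_eq F hq, hF, sq] at hcard
  exact hcard.not_gt (lt_mul_self hq)

end Frobenius

theorem card_isUnitaryPower_zero :
    Nat.card {f : F[X] // IsUnitaryPower σ M f ∧ f.natDegree = 0} = 1 := by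
  refine Nat.card_eq_one_iff_unique.2
    ⟨⟨fun f g => Subtype.ext ?_⟩, ⟨1, isUnitaryPower_one, natDegree_one⟩⟩
  rw [eq_one_of_monic_natDegree_zero f.2.1.1.1 f.2.2,
    eq_one_of_monic_natDegree_zero g.2.1.1.1 g.2.2]

theorem finite_setOf_minUnitaryPower_natDegree_le [Finite F] (n : ℕ) :
    {P : MinUnitaryPower σ M | P.1.natDegree ≤ n}.Finite :=
  (finite_setOf_natDegree_le n).preimage Subtype.val_injective.injOn

end GeneratingFunction

/-- Generating function for the conjugacy classes of cyclic `M`-th powers in `U(n,q²)`.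
Odd `d` are enumerated as `2k+1` and `d ≥ 1` as `k+1`; a negative exponent is the inverse in
`ℚ[[z]]` of a series with constant term `1`. -/
theorem statement9 (p ℓ q : ℕ) (hp : p.Prime) (hℓ : 0 < ℓ) (hq : q = p ^ ℓ)
    (F : Type*) [Field F] [Fintype F] (hF : Fintype.card F = q ^ 2)
    (σ : F →+* F) (hσ : ∀ x : F, σ x = x ^ q)
    (M : ℕ) (hM : 2 ≤ M) (hMq : M.Coprime q) :
    Multipliable (fun k : ℕ => (((1 : PowerSeries ℚ) - PowerSeries.X ^ (2 * k + 1)) ^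
        NtildeM σ M (2 * k + 1))⁻¹) ∧
    Multipliable (fun k : ℕ => (((1 : PowerSeries ℚ) - PowerSeries.X ^ (2 * (k + 1))) ^
        RtildeM σ M (k + 1))⁻¹) ∧
    (PowerSeries.mk fun n => if n = 0 then (1 : ℚ) else (numCycPowerClasses σ M n : ℚ)) =
      (∏' k : ℕ, (((1 : PowerSeries ℚ) - PowerSeries.X ^ (2 * k + 1)) ^
          NtildeM σ M (2 * k + 1))⁻¹) *
      ∏' k : ℕ, (((1 : PowerSeries ℚ) - PowerSeries.X ^ (2 * (k + 1))) ^
          RtildeM σ M (k + 1))⁻¹ := by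
  subst hq
  have : Fact p.Prime := ⟨hp⟩
  have : CharP F p := charP_of_card_eq_prime_pow (hF.trans (pow_mul p ℓ 2).symm)
  have hσσ := involutive_of_forall_eq_pow hF hσ
  obtain ⟨l, hl⟩ := exists_ne_of_forall_eq_pow hF hσ
  have hMp : M.Coprime p := hMq.coprime_dvd_right (dvd_pow_self p hℓ.ne')
  refine ⟨multipliable_inv_one_sub_X_pow_pow_of_lt (fun k => by omega) _,
    multipliable_inv_one_sub_X_pow_pow_of_lt (fun k => by omega) _, ?_⟩
  have hcoeff (n : ℕ) : (if n = 0 then 1 else numCycPowerClasses σ M n) =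
      Nat.card {e : MinUnitaryPower σ M →₀ ℕ // Finsupp.weight (fun P => P.1.natDegree) e = n} := by
    rw [← card_isUnitaryPower_eq_card_weight hMp]
    split_ifs with hn
    · rw [hn, card_isUnitaryPower_zero]
    · exact numCycPowerClasses_eq_card hσσ hl
  have hprod := mk_card_weight_eq_tprod_odd_mul_tprod_even (K := ℚ)
    (fun P : MinUnitaryPower σ M => P.2.1.natDegree_ne_zero)
    finite_setOf_minUnitaryPower_natDegree_le
  simp only [← hcoeff, Nat.cast_ite, Nat.cast_one] at hprod
  rw [hprod]
  simp only [NtildeM_eq_card hσσ (odd_two_mul_add_one _),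
    RtildeM_eq_card hσσ (by omega : M ≠ 0) fun f hf => hf.odd_natDegree hF hσ]
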